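/- Let n ≥ 2 and let Ω be a domain in ℝⁿ. Let 𝔘(Ω) be the set of harmonic functions u in Ω with sup_Ω |u| ≤ 1. Suppose a point ξ ∈ ∂Ω can be touched by an interior ball B ⊂ Ω (i.e., B is an open ball contained in Ω with ξ on its boundary). Then limsup_{x→ξ} sup_{u∈𝔘(Ω)} |x−ξ| · |∇u(x)| ≤ C_n, where x ranges over points of the radius of B directed from the center of B to ξ, and C_n = 4(n−1)^{(n−1)/2} ω_{n−1} / (n^{n/2} ω_n). -/

import Mathlib

open MeasureTheory Real Filter Metric
open scoped Real RealInnerProductSpace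

noncomputable section

/-- `Eu n` is the Euclidean space `ℝⁿ`. -/
abbrev Eu (n : ℕ) := EuclideanSpace ℝ (Fin n)

/-- `ω_n`: the surface area of the unit sphere `S^{n-1}` in `ℝⁿ`,
given by the classical formula `2 π^{n/2} / Γ(n/2)`. -/
def sphereArea (n : ℕ) : ℝ := 2 * π ^ ((n : ℝ) / 2) / Real.Gamma ((n : ℝ) / 2)

/-- A function is harmonic on a set: it is twice continuously differentiable
there and its Laplacian (the sum of the pure second partial derivatives in the
coordinate directions) vanishes at every point of the set. -/
def IsHarmonicOn {n : ℕ} (u : Eu n → ℝ) (Ω : Set (Eu n)) : Prop :=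
  ContDiffOn ℝ 2 u Ω ∧ ∀ x ∈ Ω,
    ∑ i, fderiv ℝ (fun y => fderiv ℝ u y (EuclideanSpace.single i 1)) x
      (EuclideanSpace.single i 1) = 0

/-- The constant `C_n = 4 (n-1)^{(n-1)/2} ω_{n-1} / (n^{n/2} ω_n)`. -/
def Cconst (n : ℕ) : ℝ :=
  4 * ((n : ℝ) - 1) ^ (((n : ℝ) - 1) / 2) * sphereArea (n - 1) /
    ((n : ℝ) ^ ((n : ℝ) / 2) * sphereArea n)

section Aux

open scoped Topology

def pd {n : ℕ} (i : Fin n) (f : Eu n → ℝ) (y : Eu n) : ℝ :=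
  fderiv ℝ f y (EuclideanSpace.single i 1)

def lap {n : ℕ} (f : Eu n → ℝ) (y : Eu n) : ℝ := ∑ i, pd i (pd i f) y

lemma contDiffAt_pd {n : ℕ} (i : Fin n) {f : Eu n → ℝ} {y : Eu n} (h : ContDiffAt ℝ 2 f y) :
    ContDiffAt ℝ 1 (pd i f) y := by
  have := h.fderiv_right (m := 1) (by norm_num)
  exact this.clm_apply contDiffAt_const

lemma continuousAt_pdpd {n : ℕ} (i j : Fin n) {f : Eu n → ℝ} {y : Eu n} (h : ContDiffAt ℝ 2 f y) :
    ContinuousAt (pd j (pd i f)) y := by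
  have := (contDiffAt_pd i h).fderiv_right (m := 0) (by norm_num)
  exact (this.clm_apply contDiffAt_const).continuousAt

lemma continuousAt_lap {n : ℕ} {f : Eu n → ℝ} {y : Eu n} (h : ContDiffAt ℝ 2 f y) :
    ContinuousAt (lap f) y := by
  unfold lap
  exact tendsto_finsetSum _ fun i _ => continuousAt_pdpd i i h

lemma pd_mul {n : ℕ} (i : Fin n) {f g : Eu n → ℝ} {y : Eu n} (hf : DifferentiableAt ℝ f y)
    (hg : DifferentiableAt ℝ g y) : pd i (fun y => f y * g y) y = f y * pd i g y + g y * pd i f y := by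
  unfold pd
  rw [fderiv_fun_mul hf hg]
  simp

def gF {n : ℕ} (v g χ : Eu n → ℝ) (i : Fin n) (y : Eu n) : ℝ :=
  v y * (χ y * pd i g y) + v y * (g y * pd i χ y) - g y * (χ y * pd i v y)

lemma gF_diff {n : ℕ} {v g χ : Eu n → ℝ} {y : Eu n} (i : Fin n) (hv : ContDiffAt ℝ 2 v y)
    (hg : ContDiffAt ℝ 2 g y) (hχ : ContDiffAt ℝ 2 χ y) :
    DifferentiableAt ℝ (gF v g χ i) y ∧ pd i (gF v g χ i) y =
      v y * (χ y * pd i (pd i g) y + 2 * (pd i χ y * pd i g y) + g y * pd i (pd i χ) y)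
        - g y * χ y * pd i (pd i v) y := by
  have v1 := hv.differentiableAt (by norm_num)
  have g1 := hg.differentiableAt (by norm_num)
  have c1 := hχ.differentiableAt (by norm_num)
  have v2 := (contDiffAt_pd i hv).differentiableAt (by norm_num)
  have g2 := (contDiffAt_pd i hg).differentiableAt (by norm_num)
  have c2 := (contDiffAt_pd i hχ).differentiableAt (by norm_num)
  constructor
  · unfold gF
    fun_prop
  · have e1 : pd i (fun y => v y * (χ y * pd i g y)) y = _ := pd_mul i v1 (c1.mul g2)
    have e2 : pd i (fun y => v y * (g y * pd i χ y)) y = _ := pd_mul i v1 (g1.mul c2)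
    have e3 : pd i (fun y => g y * (χ y * pd i v y)) y = _ := pd_mul i g1 (c1.mul v2)
    have f1 : pd i (fun y => (χ y * pd i g y)) y = _ := pd_mul i c1 g2
    have f2 : pd i (fun y => (g y * pd i χ y)) y = _ := pd_mul i g1 c2
    have f3 : pd i (fun y => (χ y * pd i v y)) y = _ := pd_mul i c1 v2
    have d1 : DifferentiableAt ℝ (fun y => v y * (χ y * pd i g y)) y := by fun_prop
    have d2 : DifferentiableAt ℝ (fun y => v y * (g y * pd i χ y)) y := by fun_prop
    have d3 : DifferentiableAt ℝ (fun y => g y * (χ y * pd i v y)) y := by fun_prop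
    have : pd i (gF v g χ i) y = pd i (fun y => v y * (χ y * pd i g y)) y +
        pd i (fun y => v y * (g y * pd i χ y)) y - pd i (fun y => g y * (χ y * pd i v y)) y := by
      unfold gF
      show fderiv ℝ _ y _ = fderiv ℝ _ y _ + fderiv ℝ _ y _ - fderiv ℝ _ y _
      rw [fderiv_fun_sub (d1.fun_add d2) d3, fderiv_fun_add d1 d2]
      simp
    rw [this, e1, e2, e3, f1, f2, f3]
    ring

def tl (n : ℕ) : (Fin n → ℝ) →L[ℝ] Eu n :=
  ((EuclideanSpace.equiv (Fin n) ℝ).symm : (Fin n → ℝ) →L[ℝ] Eu n)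

lemma tl_apply {n : ℕ} (x : Fin n → ℝ) : tl n x = WithLp.toLp 2 x := rfl

def boxA (m : ℕ) (K : ℝ) : Fin (m + 1) → ℝ := Fin.cons 0 (fun _ => -K)
def boxB (m : ℕ) (K : ℝ) : Fin (m + 1) → ℝ := fun _ => K

lemma le_norm_of_coord {n : ℕ} {K : ℝ} {y : Eu n} (i : Fin n) (h : |y i| = K) : K ≤ ‖y‖ := by
  rw [← h]
  exact PiLp.norm_apply_le y i

lemma green (m : ℕ) (K : ℝ) (hK : 0 < K) (v g χ : Eu (m + 1) → ℝ) (U : Set (Eu (m + 1)))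
    (hU : IsOpen U) (hQ : ∀ x ∈ Set.Icc (boxA m K) (boxB m K), WithLp.toLp 2 x ∈ U)
    (hv : ContDiffOn ℝ 2 v U) (harm : ∀ y ∈ U, lap v y = 0) (hg : ContDiff ℝ 2 g)
    (hχ : ContDiff ℝ 2 χ) (hχ0 : ∀ y, K ≤ ‖y‖ → χ y = 0 ∧ ∀ i, pd i χ y = 0)
    (hg0 : ∀ y : Eu (m + 1), y 0 = 0 → g y = 0) :
    ∫ x in Set.Icc (boxA m K) (boxB m K),
      (fun y => v y * (χ y * lap g y + 2 * ∑ i, pd i χ y * pd i g y + g y * lap χ y))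
        (WithLp.toLp 2 x)
    = - ∫ x in Set.Icc (fun _ : Fin m => -K) (fun _ => K),
        (fun y => v y * (χ y * pd 0 g y)) (WithLp.toLp 2 (Fin.insertNth (0 : Fin (m + 1)) (0 : ℝ) x)) := by
  have hle : boxA m K ≤ boxB m K := by
    intro i
    refine Fin.cases ?_ (fun j => ?_) i
    · simp [boxA, boxB, hK.le]
    · simp only [boxA, boxB, Fin.cons_succ]; linarith
  have hvat : ∀ y ∈ U, ContDiffAt ℝ 2 v y := fun y hy => hv.contDiffAt (hU.mem_nhds hy)
  have hd : ∀ x ∈ Set.Icc (boxA m K) (boxB m K), ∀ i, HasFDerivAt (fun x => gF v g χ i (tl _ x))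
      ((fderiv ℝ (gF v g χ i) (tl _ x)).comp (tl _)) x := by
    intro x hx i
    exact ((gF_diff i (hvat _ (hQ x hx)) hg.contDiffAt hχ.contDiffAt).1.hasFDerivAt).comp x
      (tl _).hasFDerivAt
  have hval : ∀ x ∈ Set.Icc (boxA m K) (boxB m K),
      (∑ i, ((fderiv ℝ (gF v g χ i) (tl _ x)).comp (tl _)) (Pi.single i 1)) =
      (fun y => v y * (χ y * lap g y + 2 * ∑ i, pd i χ y * pd i g y + g y * lap χ y))
        (WithLp.toLp 2 x) := by
    intro x hx
    have : ∀ i, ((fderiv ℝ (gF v g χ i) (tl _ x)).comp (tl _)) (Pi.single i 1) =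
        pd i (gF v g χ i) (tl _ x) := by
      intro i; rfl
    simp only [this]
    simp only [tl_apply]
    rw [Finset.sum_congr rfl fun i _ => (gF_diff i (hvat _ (hQ x hx)) hg.contDiffAt hχ.contDiffAt).2]
    have h0 := harm _ (hQ x hx)
    rw [Finset.sum_sub_distrib, ← Finset.mul_sum, ← Finset.mul_sum]
    have : ∑ i, pd i (pd i v) (WithLp.toLp 2 x) = 0 := h0
    rw [this, Finset.sum_add_distrib, Finset.sum_add_distrib, ← Finset.mul_sum, ← Finset.mul_sum,
      ← Finset.mul_sum]
    simp only [lap, mul_zero, sub_zero]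
  have key := integral_divergence_of_hasFDerivAt_off_countable' (boxA m K) (boxB m K) hle
    (fun i x => gF v g χ i (tl _ x)) (fun i x => (fderiv ℝ (gF v g χ i) (tl _ x)).comp (tl _)) ∅
    Set.countable_empty
    (fun i x hx => ((hd x hx i).continuousAt).continuousWithinAt)
    (fun x hx i => hd x ⟨fun j => (hx.1 j trivial).1.le, fun j => (hx.1 j trivial).2.le⟩ i)
    (by
      have : IntegrableOn (fun x => (fun y => v y * (χ y * lap g y + 2 * ∑ i, pd i χ y * pd i g y + g y * lap χ y))
        (tl _ x)) (Set.Icc (boxA m K) (boxB m K)) := by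
        apply ContinuousOn.integrableOn_compact isCompact_Icc
        intro x hx
        apply ContinuousAt.continuousWithinAt
        have c1 : ContinuousAt v (tl _ x) := (hvat _ (hQ x hx)).continuousAt
        have c2 : ContinuousAt (lap g) (tl _ x) := continuousAt_lap hg.contDiffAt
        have c3 : ContinuousAt (lap χ) (tl _ x) := continuousAt_lap hχ.contDiffAt
        have c4 : ∀ i, ContinuousAt (pd i χ) (tl _ x) :=
          fun i => (contDiffAt_pd i hχ.contDiffAt).continuousAt
        have c5 : ∀ i, ContinuousAt (pd i g) (tl _ x) :=
          fun i => (contDiffAt_pd i hg.contDiffAt).continuousAt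
        have c6 : ContinuousAt (fun y => ∑ i, pd i χ y * pd i g y) (tl _ x) :=
          tendsto_finsetSum _ fun i _ => (c4 i).mul (c5 i)
        have c7 := hg.continuous.continuousAt (x := tl _ x)
        have c8 := hχ.continuous.continuousAt (x := tl _ x)
        exact ContinuousAt.comp (f := tl (m+1)) (c1.mul (((c8.mul c2).add (c6.const_mul 2)).add (c7.mul c3)))
          (tl _).continuous.continuousAt
      exact this.congr_fun (fun x hx => (hval x hx).symm) measurableSet_Icc)
  rw [setIntegral_congr_fun measurableSet_Icc hval] at key
  rw [key]
  have hz : ∀ i (y : Eu (m + 1)), |y i| = K → gF v g χ i y = 0 := by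
    intro i y hy
    obtain ⟨h1, h2⟩ := hχ0 y (le_norm_of_coord i hy)
    simp [gF, h1, h2]
  rw [Fin.sum_univ_succ]
  have h2 : ∀ i : Fin m, ((∫ x in Set.Icc (boxA m K ∘ (Fin.succ i).succAbove) (boxB m K ∘ (Fin.succ i).succAbove),
      gF v g χ (Fin.succ i) (tl _ ((Fin.succ i).insertNth (boxB m K (Fin.succ i)) x))) -
        ∫ x in Set.Icc (boxA m K ∘ (Fin.succ i).succAbove) (boxB m K ∘ (Fin.succ i).succAbove),
      gF v g χ (Fin.succ i) (tl _ ((Fin.succ i).insertNth (boxA m K (Fin.succ i)) x))) = 0 := by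
    intro i
    have e1 : ∀ x, gF v g χ (Fin.succ i) (tl _ ((Fin.succ i).insertNth (boxB m K (Fin.succ i)) x)) = 0 := by
      intro x
      apply hz
      simp [tl_apply, boxB, abs_of_pos hK]
    have e2 : ∀ x, gF v g χ (Fin.succ i) (tl _ ((Fin.succ i).insertNth (boxA m K (Fin.succ i)) x)) = 0 := by
      intro x
      apply hz
      simp [tl_apply, boxA, abs_of_pos hK]
    simp [e1, e2]
  rw [Finset.sum_eq_zero fun i _ => h2 i, add_zero]
  have e1 : ∀ x, gF v g χ 0 (tl _ ((0 : Fin (m+1)).insertNth (boxB m K 0) x)) = 0 := by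
    intro x
    apply hz
    simp [tl_apply, boxB, abs_of_pos hK]
  have e2 : ∀ x, gF v g χ 0 (tl _ ((0 : Fin (m+1)).insertNth (boxA m K 0) x)) =
      (fun y => v y * (χ y * pd 0 g y)) (WithLp.toLp 2 (Fin.insertNth (0 : Fin (m + 1)) (0 : ℝ) x)) := by
    intro x
    have : g (tl _ ((0 : Fin (m+1)).insertNth (boxA m K 0) x)) = 0 := by
      apply hg0
      simp [tl_apply, boxA]
    unfold gF
    rw [this]
    simp [boxA, tl_apply]
  have e3 : Set.Icc (boxA m K ∘ (0 : Fin (m+1)).succAbove) (boxB m K ∘ (0 : Fin (m+1)).succAbove)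
     = Set.Icc (fun _ : Fin m => -K) (fun _ => K) := by
    congr 1
  simp only [e1, e2]
  rw [e3]
  simp


def kk {n : ℕ} (r a : ℝ) (z : Eu n) : ℝ := (‖z‖ ^ 2 + r ^ 2) ^ (-a)

lemma qpos {n : ℕ} {r : ℝ} (hr : 0 < r) (z : Eu n) : 0 < ‖z‖ ^ 2 + r ^ 2 := by positivity

lemma kk_nonneg {n : ℕ} (r a : ℝ) (z : Eu n) : 0 ≤ kk r a z := by
  unfold kk; positivity

lemma kk_contDiff {n : ℕ} {r : ℝ} (hr : 0 < r) (a : ℝ) : ContDiff ℝ 2 (kk (n := n) r a) := by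
  unfold kk
  refine ContDiff.rpow_const_of_ne ?_ (fun z => (qpos hr z).ne')
  exact (contDiff_norm_sq ℝ).add contDiff_const

lemma pd_kk {n : ℕ} {r : ℝ} (hr : 0 < r) (a : ℝ) (i : Fin n) (z : Eu n) :
    pd i (kk r a) z = -2 * a * z i * kk r (a + 1) z := by
  have h1 : HasFDerivAt (fun z : Eu n => ‖z‖ ^ 2 + r ^ 2) (2 • innerSL ℝ z) z :=
    (hasStrictFDerivAt_norm_sq z).hasFDerivAt.add_const _
  have h2 := h1.rpow_const (p := -a) (Or.inl (qpos hr z).ne')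
  unfold pd
  have : fderiv ℝ (kk r a) z = _ := h2.fderiv
  rw [this]
  simp [kk, EuclideanSpace.inner_single_right]
  rw [show -a - 1 = -1 + -a by ring]
  ring

lemma kk_succ {n : ℕ} {r : ℝ} (hr : 0 < r) (a : ℝ) (z : Eu n) :
    kk r a z = (‖z‖ ^ 2 + r ^ 2) * kk r (a + 1) z := by
  unfold kk
  rw [show -a = 1 + -(a + 1) by ring, Real.rpow_add (qpos hr z), Real.rpow_one]

def HH {n : ℕ} (l : Eu n) (r : ℝ) (z : Eu n) : ℝ := ⟪l, z⟫ * kk r ((n : ℝ) / 2) z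
def AA {n : ℕ} (l : Eu n) (r : ℝ) (z : Eu n) : ℝ := ⟪l, z⟫ * kk r ((n : ℝ) / 2 + 2) z

lemma pd_inner {n : ℕ} (l : Eu n) (i : Fin n) (z : Eu n) : pd i (fun z => ⟪l, z⟫) z = l i := by
  unfold pd
  have : HasFDerivAt (fun z : Eu n => ⟪l, z⟫) (innerSL ℝ l) z := (innerSL ℝ l).hasFDerivAt
  rw [this.fderiv]
  simp [EuclideanSpace.inner_single_right]

lemma pd_coord {n : ℕ} (i : Fin n) (z : Eu n) : pd i (fun z => z i) z = 1 := by
  unfold pd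
  have : HasFDerivAt (fun z : Eu n => z i) (EuclideanSpace.proj i : Eu n →L[ℝ] ℝ) z :=
    (EuclideanSpace.proj i : Eu n →L[ℝ] ℝ).hasFDerivAt
  rw [this.fderiv]
  simp

lemma HH_contDiff {n : ℕ} (l : Eu n) {r : ℝ} (hr : 0 < r) : ContDiff ℝ 2 (HH l r) := by
  unfold HH
  exact (contDiff_const.inner ℝ contDiff_id).mul (kk_contDiff hr _)

lemma inner_diff {n : ℕ} (l z : Eu n) : DifferentiableAt ℝ (fun z => ⟪l, z⟫) z :=
  (innerSL ℝ l).differentiableAt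

lemma kk_diff {n : ℕ} {r : ℝ} (hr : 0 < r) (a : ℝ) (z : Eu n) : DifferentiableAt ℝ (kk r a) z :=
  (kk_contDiff hr a).contDiffAt.differentiableAt (by norm_num)

lemma coord_diff {n : ℕ} (i : Fin n) (z : Eu n) : DifferentiableAt ℝ (fun z : Eu n => z i) z :=
  (EuclideanSpace.proj i : Eu n →L[ℝ] ℝ).differentiableAt

lemma pd_HH {n : ℕ} (l : Eu n) {r : ℝ} (hr : 0 < r) (i : Fin n) (z : Eu n) :
    pd i (HH l r) z = l i * kk r ((n : ℝ) / 2) z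
      - n * (⟪l, z⟫ * (z i * kk r ((n : ℝ) / 2 + 1) z)) := by
  have : pd i (HH l r) z = _ := pd_mul i (inner_diff l z) (kk_diff hr _ z)
  rw [this, pd_inner, pd_kk hr]
  ring

lemma lap_HH {n : ℕ} (l : Eu n) {r : ℝ} (hr : 0 < r) (z : Eu n) :
    lap (HH l r) z = - (n * (n + 2) * r ^ 2 * AA l r z) := by
  have h : ∀ i, pd i (pd i (HH l r)) z =
      kk r ((n : ℝ) / 2 + 1) z * (-(2 * n) * (l i * z i)) - kk r ((n : ℝ) / 2 + 1) z * (n * ⟪l, z⟫)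
       + n * (n + 2) * ⟪l, z⟫ * kk r ((n : ℝ) / 2 + 2) z * (z i) ^ 2 := by
    intro i
    have e : pd i (HH l r) = fun z => l i * kk r ((n : ℝ) / 2) z
      - n * (⟪l, z⟫ * (z i * kk r ((n : ℝ) / 2 + 1) z)) := funext fun z => pd_HH l hr i z
    have d1 := kk_diff hr ((n : ℝ) / 2) z
    have d2 := kk_diff hr ((n : ℝ) / 2 + 1) z
    have d3 := inner_diff l z
    have d4 := coord_diff i z
    have d5 := d4.fun_mul d2
    have d6 := d3.fun_mul d5
    rw [e]
    have : pd i (fun z => l i * kk r ((n : ℝ) / 2) z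
      - n * (⟪l, z⟫ * (z i * kk r ((n : ℝ) / 2 + 1) z))) z = l i * pd i (kk r ((n : ℝ) / 2)) z
       - n * pd i (fun z => ⟪l, z⟫ * (z i * kk r ((n : ℝ) / 2 + 1) z)) z := by
      show fderiv ℝ _ z _ = l i * fderiv ℝ _ z _ - n * fderiv ℝ _ z _
      rw [fderiv_fun_sub (d1.const_mul _) (d6.const_mul _), fderiv_const_mul d1, fderiv_const_mul d6]
      simp
    rw [this, pd_mul i d3 d5, pd_mul i d4 d2, pd_kk hr, pd_kk hr, pd_coord, pd_inner,
      show (n : ℝ) / 2 + 1 + 1 = n / 2 + 2 by ring]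
    ring
  unfold lap
  simp only [h]
  rw [Finset.sum_add_distrib, Finset.sum_sub_distrib]
  simp only [← Finset.mul_sum]
  have h1 : ∑ i, l i * z i = ⟪l, z⟫ := by
    simp [PiLp.inner_apply, mul_comm]
  have h2 : ∑ i, (z i) ^ 2 = ‖z‖ ^ 2 := by
    rw [EuclideanSpace.real_norm_sq_eq]
  rw [h1, h2, kk_succ hr ((n : ℝ) / 2 + 1), show (n : ℝ) / 2 + 1 + 1 = n / 2 + 2 by ring]
  simp [AA]
  ring

lemma pd_shift {n : ℕ} (i : Fin n) (f : Eu n → ℝ) (w y : Eu n) :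
    pd i (fun y => f (y - w)) y = pd i f (y - w) := by
  unfold pd
  rw [fderiv_comp_sub]

lemma lap_shift {n : ℕ} (f : Eu n → ℝ) (w y : Eu n) :
    lap (fun y => f (y - w)) y = lap f (y - w) := by
  unfold lap
  congr 1; ext i
  rw [show pd i (fun y => f (y - w)) = fun y => (pd i f) (y - w) from funext fun y => pd_shift i f w y,
    pd_shift]

lemma pd_sub {n : ℕ} (i : Fin n) {f g : Eu n → ℝ} {y : Eu n} (hf : DifferentiableAt ℝ f y)
    (hg : DifferentiableAt ℝ g y) : pd i (fun y => f y - g y) y = pd i f y - pd i g y := by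
  unfold pd
  rw [fderiv_fun_sub hf hg]
  simp

lemma lap_sub {n : ℕ} {f g : Eu n → ℝ} (hf : ContDiff ℝ 2 f)
    (hg : ContDiff ℝ 2 g) (y : Eu n) : lap (fun y => f y - g y) y = lap f y - lap g y := by
  unfold lap
  rw [← Finset.sum_sub_distrib]
  congr 1; ext i
  rw [show pd i (fun y => f y - g y) = fun y => pd i f y - pd i g y from
    funext fun y => pd_sub i (hf.contDiffAt.differentiableAt (by norm_num))
      (hg.contDiffAt.differentiableAt (by norm_num)), pd_sub]
  · exact (contDiffAt_pd i hf.contDiffAt).differentiableAt (by norm_num)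
  · exact (contDiffAt_pd i hg.contDiffAt).differentiableAt (by norm_num)

def e0 (m : ℕ) : Eu (m + 1) := EuclideanSpace.single 0 1

lemma e0_zero (m : ℕ) : e0 m 0 = 1 := by simp [e0]
lemma norm_e0 (m : ℕ) : ‖e0 m‖ = 1 := by simp [e0]
lemma inner_e0 {m : ℕ} (z : Eu (m + 1)) : ⟪z, e0 m⟫ = z 0 := by
  simp [e0, EuclideanSpace.inner_single_right]
lemma inner_e0' {m : ℕ} (z : Eu (m + 1)) : ⟪e0 m, z⟫ = z 0 := by
  rw [real_inner_comm, inner_e0]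

def rf {m : ℕ} (l : Eu (m + 1)) : Eu (m + 1) := l - (2 * l 0) • e0 m

lemma rf_zero {m : ℕ} (l : Eu (m + 1)) : rf l 0 = - l 0 := by
  simp [rf, e0_zero]; ring

lemma norm_sq_sub_e0 {m : ℕ} (y : Eu (m + 1)) : ‖y - e0 m‖ ^ 2 = ‖y‖ ^ 2 - 2 * y 0 + 1 := by
  rw [norm_sub_sq_real, inner_e0, norm_e0]; ring
lemma norm_sq_add_e0 {m : ℕ} (y : Eu (m + 1)) : ‖y - -e0 m‖ ^ 2 = ‖y‖ ^ 2 + 2 * y 0 + 1 := by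
  rw [sub_neg_eq_add, norm_add_sq_real, inner_e0, norm_e0]; ring

lemma norm_rf {m : ℕ} (l : Eu (m + 1)) : ‖rf l‖ = ‖l‖ := by
  have : ‖rf l‖ ^ 2 = ‖l‖ ^ 2 := by
    rw [rf, norm_sub_sq_real, real_inner_smul_right, inner_e0, norm_smul, norm_e0, Real.norm_eq_abs, mul_one,
      sq_abs]
    ring
  rwa [sq_eq_sq₀ (norm_nonneg _) (norm_nonneg _)] at this

def gg {m : ℕ} (l : Eu (m + 1)) (r : ℝ) (y : Eu (m + 1)) : ℝ :=
  HH l r (y - e0 m) - HH (rf l) r (y - -e0 m)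

lemma inner_rf {m : ℕ} (l y : Eu (m + 1)) (hy : y 0 = 0) : ⟪rf l, y - -e0 m⟫ = ⟪l, y - e0 m⟫ := by
  rw [rf, sub_neg_eq_add, inner_sub_left, inner_add_right, inner_add_right, inner_sub_right,
    real_inner_smul_left, real_inner_smul_left, inner_e0, inner_e0', hy, inner_e0', e0_zero]
  ring

lemma kk_rf {m : ℕ} (r a : ℝ) (y : Eu (m + 1)) (hy : y 0 = 0) :
    kk r a (y - -e0 m) = kk r a (y - e0 m) := by
  unfold kk
  rw [norm_sq_sub_e0, norm_sq_add_e0, hy]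
  norm_num

lemma gg_zero {m : ℕ} (l : Eu (m + 1)) (r : ℝ) (y : Eu (m + 1)) (hy : y 0 = 0) : gg l r y = 0 := by
  unfold gg HH
  rw [inner_rf l y hy, kk_rf _ _ y hy, sub_self]

lemma HHs_contDiff {n : ℕ} (l w : Eu n) {r : ℝ} (hr : 0 < r) :
    ContDiff ℝ 2 (fun y => HH l r (y - w)) :=
  (HH_contDiff l hr).comp (contDiff_id.sub contDiff_const)

lemma gg_contDiff {m : ℕ} (l : Eu (m + 1)) {r : ℝ} (hr : 0 < r) : ContDiff ℝ 2 (gg l r) :=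
  (HHs_contDiff _ _ hr).sub (HHs_contDiff _ _ hr)

lemma pd_gg {m : ℕ} (l : Eu (m + 1)) {r : ℝ} (hr : 0 < r) (i) (y : Eu (m + 1)) :
    pd i (gg l r) y = pd i (HH l r) (y - e0 m) - pd i (HH (rf l) r) (y - -e0 m) := by
  have := pd_sub i (y := y) ((HHs_contDiff l (e0 m) hr).contDiffAt.differentiableAt (by norm_num))
      ((HHs_contDiff (rf l) (- e0 m) hr).contDiffAt.differentiableAt (by norm_num))
  rw [pd_shift, pd_shift] at this
  exact this

lemma lap_gg {m : ℕ} (l : Eu (m + 1)) {r : ℝ} (hr : 0 < r) (y : Eu (m + 1)) :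
    lap (gg l r) y = -(((m + 1 : ℕ) : ℝ) * ((m + 1 : ℕ) + 2) * r ^ 2 *
      (AA l r (y - e0 m) - AA (rf l) r (y - -e0 m))) := by
  have := lap_sub (HHs_contDiff l (e0 m) hr) (HHs_contDiff (rf l) (- e0 m) hr) y
  rw [lap_shift, lap_shift, lap_HH _ hr, lap_HH _ hr] at this
  refine Eq.trans this ?_
  ring

lemma pd_gg_face {m : ℕ} (l : Eu (m + 1)) {r : ℝ} (hr : 0 < r) (y : Eu (m + 1)) (hy : y 0 = 0) :
    pd 0 (gg l r) y = 2 * (l 0 * kk r (((m + 1 : ℕ) : ℝ) / 2) (y - e0 m)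
      + ((m + 1 : ℕ) : ℝ) * (⟪l, y - e0 m⟫ * kk r (((m + 1 : ℕ) : ℝ) / 2 + 1) (y - e0 m))) := by
  rw [pd_gg l hr, pd_HH _ hr, pd_HH _ hr, kk_rf _ _ y hy, kk_rf _ _ y hy, inner_rf l y hy, rf_zero]
  have h1 : (y - e0 m) 0 = -1 := by simp [e0, hy]
  have h2 : (y - -e0 m) 0 = 1 := by simp [e0, hy]
  rw [h1, h2]
  ring

lemma kk_le {n : ℕ} (r : ℝ) (j : ℕ) (z : Eu n) (hz : 0 < ‖z‖) :
    kk r ((j : ℝ) / 2) z ≤ (‖z‖ ^ j)⁻¹ := by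
  unfold kk
  have h1 : ‖z‖ ^ 2 ≤ ‖z‖ ^ 2 + r ^ 2 := by nlinarith [sq_nonneg r]
  have h2 := Real.rpow_le_rpow_of_nonpos (z := -((j : ℝ) / 2)) (by positivity) h1
    (by have : (0:ℝ) ≤ j := by positivity
        linarith)
  refine h2.trans (le_of_eq ?_)
  rw [Real.rpow_neg (by positivity), ← Real.rpow_natCast ‖z‖ 2, ← Real.rpow_mul hz.le]
  rw [show ((2 : ℕ) : ℝ) * ((j : ℝ) / 2) = (j : ℕ) by push_cast; ring, Real.rpow_natCast]

lemma HH_bound {m : ℕ} (l : Eu (m + 1)) (hl : ‖l‖ = 1) (r s : ℝ) (hs : 0 < s) (z : Eu (m + 1))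
    (hz : s ≤ ‖z‖) : |HH l r z| ≤ (s ^ m)⁻¹ := by
  have hz0 := hs.trans_le hz
  unfold HH
  rw [abs_mul, abs_of_nonneg (kk_nonneg _ _ _)]
  have h1 : |⟪l, z⟫| ≤ ‖z‖ := by simpa [hl] using abs_real_inner_le_norm l z
  calc |⟪l, z⟫| * kk r (((m + 1 : ℕ) : ℝ) / 2) z ≤ ‖z‖ * (‖z‖ ^ (m + 1))⁻¹ :=
        mul_le_mul h1 (kk_le r _ z hz0) (kk_nonneg _ _ _) (norm_nonneg _)
    _ = (‖z‖ ^ m)⁻¹ := by rw [pow_succ]; field_simp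
    _ ≤ _ := by gcongr

lemma pd_HH_bound {m : ℕ} (l : Eu (m + 1)) (hl : ‖l‖ = 1) (r s : ℝ) (hr : 0 < r) (hs : 0 < s)
    (i) (z : Eu (m + 1)) (hz : s ≤ ‖z‖) : |pd i (HH l r) z| ≤ (m + 2) * (s ^ (m + 1))⁻¹ := by
  have hz0 := hs.trans_le hz
  rw [pd_HH l hr]
  have h1 : |⟪l, z⟫| ≤ ‖z‖ := by simpa [hl] using abs_real_inner_le_norm l z
  have h2 : |l i| ≤ 1 := by simpa [hl] using PiLp.norm_apply_le l i
  have h3 : |z i| ≤ ‖z‖ := by simpa using PiLp.norm_apply_le z i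
  have k1 := kk_le r (m + 1) z hz0
  have k2 : kk r (((m + 1 : ℕ) : ℝ) / 2 + 1) z ≤ (‖z‖ ^ (m + 3))⁻¹ := by
    have := kk_le r (m + 3) z hz0
    rwa [show ((m + 3 : ℕ) : ℝ) / 2 = ((m + 1 : ℕ) : ℝ) / 2 + 1 by push_cast; ring] at this
  have n1 := kk_nonneg r (((m + 1 : ℕ) : ℝ) / 2) z
  have n2 := kk_nonneg r (((m + 1 : ℕ) : ℝ) / 2 + 1) z
  calc _ ≤ |l i * kk r (((m + 1 : ℕ) : ℝ) / 2) z| + |((m + 1 : ℕ) : ℝ) * (⟪l, z⟫ * (z i * kk r (((m + 1 : ℕ) : ℝ) / 2 + 1) z))| := abs_sub _ _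
    _ = |l i| * kk r (((m + 1 : ℕ) : ℝ) / 2) z + ((m + 1 : ℕ) : ℝ) * (|⟪l, z⟫| * (|z i| * kk r (((m + 1 : ℕ) : ℝ) / 2 + 1) z)) := by
        simp only [abs_mul]
        rw [abs_of_nonneg n1, abs_of_nonneg n2, Nat.abs_cast]
    _ ≤ 1 * (‖z‖ ^ (m + 1))⁻¹ + ((m + 1 : ℕ) : ℝ) * (‖z‖ * (‖z‖ * (‖z‖ ^ (m + 3))⁻¹)) := by
        gcongr
    _ = (m + 2) * (‖z‖ ^ (m + 1))⁻¹ := by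
        push_cast; field_simp; ring
    _ ≤ _ := by gcongr


open scoped Topology

lemma pd_const_of_eventually {n : ℕ} {f : Eu n → ℝ} {y : Eu n} {a : ℝ} (h : f =ᶠ[𝓝 y] fun _ => a) (i) :
    pd i f y = 0 := by
  unfold pd
  rw [h.fderiv_eq]
  simp

lemma lap_const_of_eventually {n : ℕ} {f : Eu n → ℝ} {y : Eu n} {a : ℝ} (h : f =ᶠ[𝓝 y] fun _ => a) :
    lap f y = 0 := by
  unfold lap
  refine Finset.sum_eq_zero fun i _ => ?_
  have : pd i f =ᶠ[𝓝 y] fun _ => 0 := h.eventuallyEq_nhds.mono fun z hz => pd_const_of_eventually hz i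
  exact pd_const_of_eventually this i

lemma pd_scale {n : ℕ} (i : Fin n) (f : Eu n → ℝ) (c : ℝ) (y : Eu n) :
    pd i (fun y => f (c • y)) y = c * pd i f (c • y) := by
  unfold pd
  rw [fderiv_comp_smul]
  simp

lemma pd_const_mul {n : ℕ} (i : Fin n) (f : Eu n → ℝ) (c : ℝ) (y : Eu n) :
    pd i (fun y => c * f y) y = c * pd i f y := by
  unfold pd
  have := fderiv_const_smul_field (𝕜 := ℝ) (f := f) c
  have h2 : (fun y => c * f y) = c • f := by ext; simp
  rw [h2, this]
  simp

lemma lap_scale {n : ℕ} (f : Eu n → ℝ) (c : ℝ) (y : Eu n) :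
    lap (fun y => f (c • y)) y = c ^ 2 * lap f (c • y) := by
  unfold lap
  rw [Finset.mul_sum]
  refine Finset.sum_congr rfl fun i _ => ?_
  rw [show pd i (fun y => f (c • y)) = fun y => c * pd i f (c • y) from
    funext fun y => pd_scale i f c y]
  rw [pd_const_mul i (fun y => pd i f (c • y)), pd_scale]
  ring

structure CutOff {n : ℕ} (χ : Eu n → ℝ) (M B : ℝ) : Prop where
  smooth : ContDiff ℝ 2 χ
  nonneg : ∀ y, 0 ≤ χ y
  le_one : ∀ y, χ y ≤ 1
  inner : ∀ y, ‖y‖ < M → χ y = 1 ∧ (∀ i, pd i χ y = 0) ∧ lap χ y = 0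
  outer : ∀ y, 2 * M ≤ ‖y‖ → χ y = 0 ∧ ∀ i, pd i χ y = 0
  bd1 : ∀ i y, |pd i χ y| ≤ B / M
  bd2 : ∀ y, |lap χ y| ≤ B / M ^ 2

lemma exists_cutoff (n : ℕ) : ∃ B : ℝ, 0 ≤ B ∧ ∀ M : ℝ, 0 < M → ∃ χ : Eu n → ℝ, CutOff χ M B := by
  let b : ContDiffBump (0 : Eu n) := ⟨1, 2, by norm_num, by norm_num⟩
  have bs : ContDiff ℝ 2 b := b.contDiff
  have bout : ∀ y : Eu n, 2 < ‖y‖ → (b : Eu n → ℝ) =ᶠ[𝓝 y] fun _ => 0 := by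
    intro y hy
    have : {z : Eu n | 2 < ‖z‖} ∈ 𝓝 y := (isOpen_lt continuous_const continuous_norm).mem_nhds hy
    filter_upwards [this] with z hz
    exact b.zero_of_le_dist (by simpa using le_of_lt hz)
  have bb : ∀ f : Eu n → ℝ, Continuous f → (∀ y, 2 < ‖y‖ → f y = 0) → ∃ B, 0 ≤ B ∧ ∀ y, |f y| ≤ B := by
    intro f hf h0
    obtain ⟨C, hC⟩ := (isCompact_closedBall (0 : Eu n) 2).exists_bound_of_continuousOn hf.continuousOn
    refine ⟨max C 0, le_max_right _ _, fun y => ?_⟩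
    by_cases hy : ‖y‖ ≤ 2
    · exact (hC y (by simpa using hy)).trans (le_max_left _ _)
    · rw [h0 y (not_le.1 hy)]; simp
  have h1 : ∀ i, ∃ B, 0 ≤ B ∧ ∀ y, |pd i b y| ≤ B := fun i => bb _
    (continuous_iff_continuousAt.2 fun y => (contDiffAt_pd i bs.contDiffAt).continuousAt)
    fun y hy => pd_const_of_eventually (bout y hy) i
  obtain ⟨B2, hB2, h2⟩ := bb (lap b) (continuous_iff_continuousAt.2 fun y => continuousAt_lap bs.contDiffAt)
    fun y hy => lap_const_of_eventually (bout y hy)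
  choose B1 hB1 h1 using h1
  have hs : 0 ≤ ∑ i, B1 i := Finset.sum_nonneg fun i _ => hB1 i
  refine ⟨∑ i, B1 i + B2, by positivity, fun M hM => ⟨fun y => b (M⁻¹ • y), ?_⟩⟩
  have nrm : ∀ y : Eu n, ‖M⁻¹ • y‖ = ‖y‖ / M := by
    intro y
    rw [norm_smul, Real.norm_eq_abs, abs_of_pos (inv_pos.2 hM)]; field_simp
  refine ⟨?_, fun y => b.nonneg, fun y => b.le_one, ?_, ?_, ?_, ?_⟩
  · exact bs.comp (contDiff_const_smul _)
  · intro y hy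
    have hev : (fun y : Eu n => b (M⁻¹ • y)) =ᶠ[𝓝 y] fun _ => 1 := by
      have : {z : Eu n | ‖z‖ < M} ∈ 𝓝 y := (isOpen_lt continuous_norm continuous_const).mem_nhds hy
      filter_upwards [this] with z hz
      apply b.one_of_mem_closedBall
      simp only [mem_closedBall, dist_zero_right, nrm]
      exact (div_le_one hM).2 (le_of_lt hz)
    exact ⟨hev.self_of_nhds, fun i => pd_const_of_eventually hev i, lap_const_of_eventually hev⟩
  · intro y hy
    have h0 : b (M⁻¹ • y) = 0 := by
      apply b.zero_of_le_dist
      simp only [dist_zero_right, nrm]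
      rw [le_div_iff₀ hM]; exact hy
    refine ⟨h0, fun i => ?_⟩
    have : IsLocalMin (fun y : Eu n => b (M⁻¹ • y)) y := by
      refine Filter.Eventually.of_forall fun z => ?_
      simp only [h0]
      exact b.nonneg
    unfold pd
    rw [this.fderiv_eq_zero]; simp
  · intro i y
    rw [pd_scale, abs_mul, abs_of_pos (inv_pos.2 hM), inv_mul_eq_div]
    gcongr
    have : B1 i ≤ ∑ i, B1 i := Finset.single_le_sum (fun i _ => hB1 i) (Finset.mem_univ i)
    linarith [h1 i (M⁻¹ • y)]
  · intro y
    rw [lap_scale, abs_mul, abs_of_nonneg (by positivity), inv_pow, inv_mul_eq_div]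
    gcongr
    linarith [h2 (M⁻¹ • y)]

lemma box_nonneg {m : ℕ} {K : ℝ} {x : Fin (m + 1) → ℝ} (hx : x ∈ Set.Icc (boxA m K) (boxB m K)) :
    0 ≤ x 0 := by
  have := hx.1 0
  simpa [boxA] using this

lemma box_vol (m : ℕ) {K : ℝ} (hK : 0 < K) :
    volume.real (Set.Icc (boxA m K) (boxB m K)) ≤ (2 * K) ^ (m + 1) := by
  have hle : boxA m K ≤ boxB m K := by
    intro i
    refine Fin.cases ?_ (fun j => ?_) i
    · simp [boxA, boxB, hK.le]
    · simp only [boxA, boxB, Fin.cons_succ]; linarith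
  rw [Measure.real, Real.volume_Icc_pi_toReal hle]
  calc ∏ i, (boxB m K i - boxA m K i) ≤ ∏ i : Fin (m + 1), 2 * K := by
        refine Finset.prod_le_prod (fun i _ => sub_nonneg.2 (hle i)) fun i _ => ?_
        refine Fin.cases ?_ (fun j => ?_) i
        · simp [boxA, boxB]; linarith
        · simp only [boxA, boxB, Fin.cons_succ]; linarith
    _ = _ := by simp

lemma AA_bound {m : ℕ} (l : Eu (m + 1)) (hl : ‖l‖ = 1) (r : ℝ) (z : Eu (m + 1)) (hz : 1 ≤ ‖z‖) :
    |AA l r z| ≤ 1 := by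
  have hz0 : 0 < ‖z‖ := by linarith
  unfold AA
  rw [abs_mul, abs_of_nonneg (kk_nonneg _ _ _)]
  have h1 : |⟪l, z⟫| ≤ ‖z‖ := by simpa [hl] using abs_real_inner_le_norm l z
  have h2 := kk_le r (m + 5) z hz0
  rw [show ((m + 5 : ℕ) : ℝ) / 2 = ((m + 1 : ℕ) : ℝ) / 2 + 2 by push_cast; ring] at h2
  calc |⟪l, z⟫| * kk r (((m + 1 : ℕ) : ℝ) / 2 + 2) z ≤ ‖z‖ * (‖z‖ ^ (m + 5))⁻¹ :=
        mul_le_mul h1 h2 (kk_nonneg _ _ _) (norm_nonneg _)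
    _ = (‖z‖ ^ (m + 4))⁻¹ := by rw [pow_succ _ (m + 4)]; field_simp
    _ ≤ 1 := inv_le_one_of_one_le₀ (one_le_pow₀ hz)

lemma AA_cont {n : ℕ} (l : Eu n) {r : ℝ} (hr : 0 < r) : Continuous (AA l r) := by
  unfold AA
  exact (continuous_const.inner continuous_id).mul (kk_contDiff hr _).continuous

def errE (m : ℕ) (M B : ℝ) : ℝ :=
  2 * ((m + 1) * (B / M * (2 * ((m + 2) * ((M / 2) ^ (m + 1))⁻¹)))) + 2 * ((M / 2) ^ m)⁻¹ * (B / M ^ 2)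

lemma core_r (m : ℕ) (M B : ℝ) (hM : 2 ≤ M) (hB : 0 ≤ B) (χ : Eu (m + 1) → ℝ) (hχ : CutOff χ M B)
    (v : Eu (m + 1) → ℝ) (U : Set (Eu (m + 1)))
    (hU : IsOpen U) (hQ : ∀ x ∈ Set.Icc (boxA m (2 * M)) (boxB m (2 * M)), WithLp.toLp 2 x ∈ U)
    (hv : ContDiffOn ℝ 2 v U) (harm : ∀ y ∈ U, lap v y = 0) (hv1 : ∀ y ∈ U, |v y| ≤ 1)
    (l : Eu (m + 1)) (hl : ‖l‖ = 1) (r : ℝ) (hr : 0 < r) :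
    |((m + 1 : ℕ) : ℝ) * ((m + 1 : ℕ) + 2) * r ^ 2 * ∫ x in Set.Icc (boxA m (2 * M)) (boxB m (2 * M)),
      (v (WithLp.toLp 2 x) * (χ (WithLp.toLp 2 x) * AA l r (WithLp.toLp 2 x - e0 m)))| ≤
    (((m + 1 : ℕ) : ℝ) * ((m + 1 : ℕ) + 2) * r ^ 2 + errE m M B) * (2 * (2 * M)) ^ (m + 1) +
      ∫ x in Set.Icc (fun _ : Fin m => -(2 * M)) (fun _ => 2 * M),
        |pd 0 (gg l r) (WithLp.toLp 2 (Fin.insertNth (0 : Fin (m + 1)) (0 : ℝ) x))| := by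
  have hM0 : 0 < M := by linarith
  have hK : 0 < 2 * M := by linarith
  have gr := green m (2 * M) hK v (gg l r) χ U hU hQ hv harm (gg_contDiff l hr) hχ.smooth hχ.outer
    (gg_zero l r)
  set c : ℝ := ((m + 1 : ℕ) : ℝ) * ((m + 1 : ℕ) + 2) with hc
  have hc0 : 0 ≤ c := by positivity
  set Q := Set.Icc (boxA m (2 * M)) (boxB m (2 * M)) with hQdef
  have hint : ∀ φ : Eu (m + 1) → ℝ, Continuous φ →
      IntegrableOn (fun x => v (WithLp.toLp 2 x) * φ (WithLp.toLp 2 x)) Q := by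
    intro φ hφ
    apply ContinuousOn.integrableOn_compact isCompact_Icc
    have ct : Continuous (fun x : Fin (m + 1) → ℝ => (WithLp.toLp 2 x : Eu (m + 1))) := (tl (m + 1)).continuous
    exact (hv.continuousOn.comp ct.continuousOn hQ).mul (hφ.comp ct).continuousOn
  set A1 : Eu (m + 1) → ℝ := fun y => χ y * AA l r (y - e0 m) with hA1
  set φR : Eu (m + 1) → ℝ := fun y => χ y * (c * r ^ 2 * AA (rf l) r (y - -e0 m)) +
    2 * ∑ i, pd i χ y * pd i (gg l r) y + gg l r y * lap χ y with hφR
  have hχc : Continuous χ := hχ.smooth.continuous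
  have hA1c : Continuous A1 := hχc.mul ((AA_cont l hr).comp (continuous_id.sub continuous_const))
  have hφRc : Continuous φR := by
    have c1 : ∀ i, Continuous (pd i χ) := fun i =>
      continuous_iff_continuousAt.2 fun y => (contDiffAt_pd i hχ.smooth.contDiffAt).continuousAt
    have c2 : ∀ i, Continuous (pd i (gg l r)) := fun i =>
      continuous_iff_continuousAt.2 fun y => (contDiffAt_pd i (gg_contDiff l hr).contDiffAt).continuousAt
    have c3 : Continuous (lap χ) :=
      continuous_iff_continuousAt.2 fun y => continuousAt_lap hχ.smooth.contDiffAt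
    have c4 : Continuous (gg l r) := (gg_contDiff l hr).continuous
    have c5 : Continuous fun y => AA (rf l) r (y - -e0 m) :=
      (AA_cont (rf l) hr).comp (continuous_id.sub continuous_const)
    fun_prop
  have hsplit : ∀ x : Fin (m + 1) → ℝ, (fun y => v y * (χ y * lap (gg l r) y + 2 * ∑ i, pd i χ y * pd i (gg l r) y + gg l r y * lap χ y))
        (WithLp.toLp 2 x) = v (WithLp.toLp 2 x) * φR (WithLp.toLp 2 x) -
          (c * r ^ 2) * (v (WithLp.toLp 2 x) * A1 (WithLp.toLp 2 x)) := by
    intro x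
    simp only [lap_gg l hr, hφR, hA1]
    rw [← hc]
    ring
  simp only [hsplit] at gr
  rw [integral_sub (hint φR hφRc) ((hint A1 hA1c).const_mul _), integral_const_mul] at gr
  have e1 : c * r ^ 2 * ∫ x in Q, v (WithLp.toLp 2 x) * A1 (WithLp.toLp 2 x) =
      (∫ x in Q, v (WithLp.toLp 2 x) * φR (WithLp.toLp 2 x)) +
      ∫ x in Set.Icc (fun _ : Fin m => -(2 * M)) (fun _ => 2 * M),
        (fun y => v y * (χ y * pd 0 (gg l r) y)) (WithLp.toLp 2 (Fin.insertNth (0 : Fin (m + 1)) (0 : ℝ) x)) := by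
    linarith
  rw [e1]
  refine (abs_add_le _ _).trans (add_le_add ?_ ?_)
  · have hb : ∀ x ∈ Q, ‖v (WithLp.toLp 2 x) * φR (WithLp.toLp 2 x)‖ ≤ c * r ^ 2 + errE m M B := by
      intro x hx
      set y : Eu (m + 1) := WithLp.toLp 2 x with hy
      have hy0 : 0 ≤ y 0 := box_nonneg hx
      have hvy := hv1 y (hQ x hx)
      rw [Real.norm_eq_abs, abs_mul]
      have hE : 0 ≤ errE m M B := by unfold errE; positivity
      have t1 : |χ y * (c * r ^ 2 * AA (rf l) r (y - -e0 m))| ≤ c * r ^ 2 := by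
        have hn : 1 ≤ ‖y - -e0 m‖ := by
          have := norm_sq_add_e0 y
          nlinarith [norm_nonneg (y - -e0 m), sq_nonneg ‖y‖]
        have ha := AA_bound (rf l) (by rw [norm_rf, hl]) r _ hn
        rw [abs_mul, abs_mul, abs_of_nonneg (hχ.nonneg y), abs_of_nonneg (show 0 ≤ c * r ^ 2 by positivity)]
        calc _ ≤ 1 * (c * r ^ 2 * 1) := by
              gcongr
              exact hχ.le_one y
          _ = _ := by ring
      have t2 : |2 * ∑ i, pd i χ y * pd i (gg l r) y + gg l r y * lap χ y| ≤ errE m M B := by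
        by_cases hyM : ‖y‖ < M
        · obtain ⟨_, h2, h3⟩ := hχ.inner y hyM
          simp [h2, h3, hE]
        · push Not at hyM
          have z1 : M / 2 ≤ ‖y - e0 m‖ := by
            have := norm_sub_norm_le y (e0 m)
            rw [norm_e0] at this; linarith
          have z2 : M / 2 ≤ ‖y - -e0 m‖ := by
            have := norm_sub_norm_le y (-e0 m)
            rw [norm_neg, norm_e0] at this; linarith
          have hs : 0 < M / 2 := by linarith
          have g1 : |gg l r y| ≤ 2 * ((M / 2) ^ m)⁻¹ := by
            have a1 := HH_bound l hl r _ hs _ z1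
            have a2 := HH_bound (rf l) (by rw [norm_rf, hl]) r _ hs _ z2
            unfold gg
            refine (abs_sub _ _).trans ?_
            linarith
          have g2 : ∀ i, |pd i (gg l r) y| ≤ 2 * ((m + 2) * ((M / 2) ^ (m + 1))⁻¹) := by
            intro i
            have a1 := pd_HH_bound l hl r _ hr hs i _ z1
            have a2 := pd_HH_bound (rf l) (by rw [norm_rf, hl]) r _ hr hs i _ z2
            rw [pd_gg l hr]
            refine (abs_sub _ _).trans ?_
            linarith
          refine (abs_add_le _ _).trans ?_
          unfold errE
          refine add_le_add ?_ ?_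
          · rw [abs_mul, abs_two]
            refine mul_le_mul_of_nonneg_left ?_ (by norm_num)
            refine (Finset.abs_sum_le_sum_abs _ _).trans ?_
            refine (Finset.sum_le_sum (g := fun _ => B / M * (2 * ((m + 2) * ((M / 2) ^ (m + 1))⁻¹))) fun i _ => ?_).trans ?_
            · rw [abs_mul]
              exact mul_le_mul (hχ.bd1 i y) (g2 i) (abs_nonneg _) (by positivity)
            · simp
          · rw [abs_mul]
            exact mul_le_mul g1 (hχ.bd2 y) (abs_nonneg _) (by positivity)
      have t3 : |φR y| ≤ c * r ^ 2 + errE m M B := by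
        simp only [hφR]
        rw [add_assoc]
        exact (abs_add_le _ _).trans (add_le_add t1 t2)
      calc |v y| * |φR y| ≤ 1 * (c * r ^ 2 + errE m M B) :=
            mul_le_mul hvy t3 (abs_nonneg _) zero_le_one
        _ = _ := one_mul _
    have hE : 0 ≤ errE m M B := by unfold errE; positivity
    refine (norm_setIntegral_le_of_norm_le_const (isCompact_Icc.measure_lt_top) hb).trans ?_
    exact mul_le_mul_of_nonneg_left (box_vol m hK) (by positivity)
  · refine (abs_integral_le_integral_abs).trans ?_
    have cins : Continuous fun x : Fin m → ℝ => (WithLp.toLp 2 (Fin.insertNth (0 : Fin (m + 1)) (0 : ℝ) x) : Eu (m + 1)) := by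
      refine (tl (m + 1)).continuous.comp (?_ : Continuous fun x : Fin m → ℝ => (Fin.insertNth (0 : Fin (m + 1)) (0 : ℝ) x : Fin (m + 1) → ℝ))
      exact Continuous.finInsertNth 0 continuous_const continuous_id
    have hin : ∀ x ∈ Set.Icc (fun _ : Fin m => -(2 * M)) (fun _ => 2 * M),
       (WithLp.toLp 2 (Fin.insertNth (0 : Fin (m + 1)) (0 : ℝ) x) : Eu (m + 1)) ∈ U := by
      intro x hx
      apply hQ
      constructor
      · intro i
        refine Fin.cases ?_ (fun j => ?_) i
        · simp [boxA]
        · simpa [boxA] using hx.1 j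
      · intro i
        refine Fin.cases ?_ (fun j => ?_) i
        · simp [boxB]; linarith
        · simpa [boxB] using hx.2 j
    have c2 : Continuous (pd 0 (gg l r)) :=
      continuous_iff_continuousAt.2 fun y => (contDiffAt_pd 0 (gg_contDiff l hr).contDiffAt).continuousAt
    refine setIntegral_mono_on ?_ ?_ measurableSet_Icc ?_
    · apply ContinuousOn.integrableOn_compact isCompact_Icc
      exact ((hv.continuousOn.comp cins.continuousOn hin).mul
        ((hχc.mul c2).comp cins).continuousOn).abs
    · apply ContinuousOn.integrableOn_compact isCompact_Icc
      exact (c2.comp cins).abs.continuousOn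
    · intro x hx
      simp only
      set y : Eu (m + 1) := WithLp.toLp 2 (Fin.insertNth (0 : Fin (m + 1)) (0 : ℝ) x)
      rw [abs_mul, abs_mul, abs_of_nonneg (hχ.nonneg y)]
      calc _ ≤ 1 * (1 * |pd 0 (gg l r) y|) := by
            gcongr
            · exact mul_nonneg (hχ.nonneg y) (abs_nonneg _)
            · exact hv1 y (hin x hx)
            · exact hχ.le_one y
        _ = _ := by ring

lemma errE_eq (m : ℕ) (M B : ℝ) (hM : 0 < M) : errE m M B * (2 * (2 * M)) ^ (m + 1) =
    (B * (4 * (m + 1) * (m + 2) * 8 ^ (m + 1) + 8 * 8 ^ m)) / M := by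
  unfold errE
  have h1 : (2 * (2 * M)) ^ (m + 1) = 8 ^ (m + 1) * (M / 2) ^ (m + 1) := by
    rw [← mul_pow]; congr 1; ring
  have h2 : (2 * (2 * M)) ^ (m + 1) = 8 ^ m * (M / 2) ^ m * (4 * M) := by
    rw [← mul_pow, pow_succ]; congr 1
    · congr 1; ring
    · ring
  have p1 : (M / 2) ^ (m + 1) ≠ 0 := by positivity
  have p2 : (M / 2) ^ m ≠ 0 := by positivity
  rw [add_mul]
  nth_rewrite 1 [h1]
  rw [h2]
  generalize (M / 2) ^ (m + 1) = a at *
  generalize (M / 2) ^ m = b at *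
  field_simp
  ring


open scoped Topology

lemma sphereArea_eq (m : ℕ) : sphereArea (m + 1) =
    ((m + 1 : ℕ) : ℝ) * volume.real (ball (0 : Eu (m + 1)) 1) := by
  rw [Measure.real, EuclideanSpace.volume_ball]
  simp only [Fintype.card_fin, ENNReal.ofReal_one, one_pow, one_mul]
  have hp : (0 : ℝ) < ((m + 1 : ℕ) : ℝ) / 2 := by positivity
  have hG := Real.Gamma_pos_of_pos hp
  rw [ENNReal.toReal_ofReal (by rw [Real.Gamma_add_one hp.ne']; positivity), Real.Gamma_add_one hp.ne']
  unfold sphereArea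
  rw [Real.rpow_div_two_eq_sqrt _ pi_pos.le, Real.rpow_natCast]
  field_simp

lemma sphereArea_pos (m : ℕ) : 0 < sphereArea (m + 1) := by
  unfold sphereArea
  have hp : (0 : ℝ) < ((m + 1 : ℕ) : ℝ) / 2 := by positivity
  have hG := Real.Gamma_pos_of_pos hp
  positivity

lemma exists_iso {n : ℕ} (a b : Eu n) (h : ‖a‖ = ‖b‖) : ∃ L : Eu n ≃ₗᵢ[ℝ] Eu n, L a = b :=
  ⟨_, Submodule.reflection_sub h⟩

lemma kk_one_int {m : ℕ} : Integrable (fun z : Eu (m + 1) => kk 1 (((m + 1 : ℕ) : ℝ) / 2 + 1) z) := by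
  have := integrable_rpow_neg_one_add_norm_sq (E := Eu (m + 1)) (μ := volume)
    (r := ((m + 1 : ℕ) : ℝ) + 2) (by simp)
  refine this.congr (Eventually.of_forall fun z => ?_)
  simp only [kk]
  rw [one_pow, add_comm]
  congr 1; ring

lemma kk_cont {n : ℕ} {r : ℝ} (hr : 0 < r) (a : ℝ) : Continuous (kk (n := n) r a) :=
  (kk_contDiff hr a).continuous

lemma quad_bound {m : ℕ} (z : Eu (m + 1)) :
    (1 + ‖z‖ ^ 2) * kk 1 (((m + 1 : ℕ) : ℝ) / 2 + 2) z = kk 1 (((m + 1 : ℕ) : ℝ) / 2 + 1) z := by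
  rw [kk_succ one_pos (((m + 1 : ℕ) : ℝ) / 2 + 1), show ((m + 1 : ℕ) : ℝ) / 2 + 1 + 1 = ((m + 1 : ℕ) : ℝ) / 2 + 2 by ring]
  ring

lemma quad_int {m : ℕ} (f : Eu (m + 1) → ℝ) (hf : AEStronglyMeasurable f volume) (C : ℝ) 
    (hb : ∀ z, |f z| ≤ C * (1 + ‖z‖ ^ 2)) :
    Integrable (fun z => f z * kk 1 (((m + 1 : ℕ) : ℝ) / 2 + 2) z) := by
  refine (kk_one_int.const_mul C).mono' (hf.mul (kk_cont one_pos _).aestronglyMeasurable) ?_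
  refine Eventually.of_forall fun z => ?_
  rw [Real.norm_eq_abs, abs_mul, abs_of_nonneg (kk_nonneg _ _ _), ← quad_bound, ← mul_assoc]
  exact mul_le_mul_of_nonneg_right (hb z) (kk_nonneg _ _ _)

lemma inner_abs_le {n : ℕ} (l z : Eu n) (hl : ‖l‖ = 1) : |⟪l, z⟫| ≤ ‖z‖ := by
  simpa [hl] using abs_real_inner_le_norm l z

lemma inner_sq_int {m : ℕ} (l : Eu (m + 1)) (hl : ‖l‖ = 1) :
    Integrable (fun z => ⟪l, z⟫ ^ 2 * kk 1 (((m + 1 : ℕ) : ℝ) / 2 + 2) z) := by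
  refine quad_int _ ?_ 1 fun z => ?_
  · exact ((continuous_const.inner continuous_id).pow 2).aestronglyMeasurable
  · have := inner_abs_le l z hl
    rw [abs_pow, sq_abs]
    have := sq_le_sq' (by linarith [abs_nonneg ⟪l, z⟫, neg_abs_le ⟪l,z⟫]) ((le_abs_self _).trans this)
    linarith

lemma rot_inv {m : ℕ} (l l' : Eu (m + 1)) (hl : ‖l‖ = 1) (hl' : ‖l'‖ = 1) (φ : ℝ → ℝ → ℝ) :
    ∫ z : Eu (m + 1), φ ⟪l, z⟫ ‖z‖ = ∫ z : Eu (m + 1), φ ⟪l', z⟫ ‖z‖ := by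
  obtain ⟨L, hL⟩ := exists_iso l l' (by rw [hl, hl'])
  rw [← L.measurePreserving.integral_comp (L.toHomeomorph.measurableEmbedding)
    (fun z => φ ⟪l', z⟫ ‖z‖)]
  congr 1; ext z
  rw [← hL, LinearIsometryEquiv.inner_map_map, LinearIsometryEquiv.norm_map]

lemma radial_tendsto (a : ℝ) (ha : 0 < a) :
    Tendsto (fun y : ℝ => y ^ (2 * a) * (y ^ 2 + 1) ^ (-a)) atTop (𝓝 1) := by
  have h1 : Tendsto (fun y : ℝ => 1 - (y ^ 2 + 1)⁻¹) atTop (𝓝 (1 - 0)) := by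
    refine tendsto_const_nhds.sub ?_
    refine tendsto_inv_atTop_zero.comp ?_
    exact tendsto_atTop_add_const_right _ _ (tendsto_pow_atTop (by norm_num))
  have h2 := h1.rpow_const (p := a) (Or.inr ha.le)
  rw [sub_zero, Real.one_rpow] at h2
  refine h2.congr' ?_
  filter_upwards [eventually_ge_atTop 0] with y hy
  rw [Real.rpow_mul hy, Real.rpow_two, Real.rpow_neg (by positivity), ← Real.inv_rpow (by positivity),
    ← Real.mul_rpow (by positivity) (by positivity)]
  congr 1
  field_simp
  ring

lemma second_moment (m : ℕ) : ∫ z : Eu (m + 1), ‖z‖ ^ 2 * kk 1 (((m + 1 : ℕ) : ℝ) / 2 + 2) z =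
    sphereArea (m + 1) / ((m + 1 : ℕ) + 2) := by
  have := integral_fun_norm_addHaar (volume : Measure (Eu (m + 1)))
    (fun y => y ^ 2 * (y ^ 2 + 1 ^ 2) ^ (-(((m + 1 : ℕ) : ℝ) / 2 + 2)))
  refine Eq.trans this ?_
  simp only [finrank_euclideanSpace, Fintype.card_fin, smul_eq_mul, nsmul_eq_mul, one_pow]
  rw [← mul_assoc, ← sphereArea_eq, div_eq_mul_inv (sphereArea (m + 1))]
  congr 1
  set a : ℝ := ((m + 1 : ℕ) : ℝ) / 2 + 1 with ha
  have ha0 : 0 < a := by positivity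
  have key : ∀ x ∈ Set.Ici (0 : ℝ), HasDerivAt (fun y : ℝ => (y ^ (m + 3) * (y ^ 2 + 1) ^ (-a)) / ((m + 1 : ℕ) + 2))
     (x ^ (m + 1 - 1) * (x ^ 2 * (x ^ 2 + 1) ^ (-(((m + 1 : ℕ) : ℝ) / 2 + 2)))) x := by
    intro x hx
    have hx1 : (0:ℝ) < x ^ 2 + 1 := by positivity
    have d1 := hasDerivAt_pow (m + 3) x
    have d2 : HasDerivAt (fun y : ℝ => y ^ 2 + 1) (2 * x) x := by
      simpa using (hasDerivAt_pow 2 x).add_const (1 : ℝ)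
    have d3 := d2.rpow_const (p := -a) (Or.inl hx1.ne')
    convert! (d1.mul d3).div_const (((m + 1 : ℕ) : ℝ) + 2) using 1
    have e1 : (x ^ 2 + 1) ^ (-a) = (x ^ 2 + 1) * (x ^ 2 + 1) ^ (-a - 1) := by
      rw [Real.rpow_sub hx1, Real.rpow_one]; field_simp
    rw [e1, show -(((m + 1 : ℕ) : ℝ) / 2 + 2) = -a - 1 by rw [ha]; ring]
    generalize (x ^ 2 + 1) ^ (-a - 1) = t
    rw [eq_div_iff (by positivity), ha]
    push_cast
    ring
  have lim : Tendsto (fun y : ℝ => (y ^ (m + 3) * (y ^ 2 + 1) ^ (-a)) / ((m + 1 : ℕ) + 2)) atTop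
      (𝓝 (1 / (((m + 1 : ℕ) : ℝ) + 2))) := by
    refine Tendsto.div_const ?_ _
    refine (radial_tendsto a ha0).congr fun y => ?_
    rw [show 2 * a = ((m + 3 : ℕ) : ℝ) by rw [ha]; push_cast; ring, Real.rpow_natCast]
  rw [integral_Ioi_of_hasDerivAt_of_nonneg' key (fun x hx => ?_) lim]
  · simp
  · have : (0:ℝ) < x := hx
    positivity

lemma dir_moment (m : ℕ) (l : Eu (m + 1)) (hl : ‖l‖ = 1) :
    ((m + 1 : ℕ) : ℝ) * ((m + 1 : ℕ) + 2) * ∫ z : Eu (m + 1), ⟪l, z⟫ ^ 2 * kk 1 (((m + 1 : ℕ) : ℝ) / 2 + 2) z =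
    sphereArea (m + 1) := by
  have h1 : ∀ i : Fin (m + 1), ∫ z : Eu (m + 1), ⟪(EuclideanSpace.single i 1 : Eu (m + 1)), z⟫ ^ 2 * kk 1 (((m + 1 : ℕ) : ℝ) / 2 + 2) z =
      ∫ z : Eu (m + 1), ⟪l, z⟫ ^ 2 * kk 1 (((m + 1 : ℕ) : ℝ) / 2 + 2) z := fun i =>
    rot_inv (EuclideanSpace.single i 1 : Eu (m + 1)) l (by simp) hl (fun s t => s ^ 2 * (t ^ 2 + 1 ^ 2) ^ (-(((m + 1 : ℕ) : ℝ) / 2 + 2)))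
  have h2 := second_moment m
  have h3 : ∫ z : Eu (m + 1), ‖z‖ ^ 2 * kk 1 (((m + 1 : ℕ) : ℝ) / 2 + 2) z =
      ∑ i : Fin (m + 1), ∫ z : Eu (m + 1), ⟪(EuclideanSpace.single i 1 : Eu (m + 1)), z⟫ ^ 2 * kk 1 (((m + 1 : ℕ) : ℝ) / 2 + 2) z := by
    rw [← integral_finsetSum _ fun i _ => inner_sq_int _ (by simp)]
    congr 1; ext z
    rw [← Finset.sum_mul, EuclideanSpace.real_norm_sq_eq]
    simp [EuclideanSpace.inner_single_left]
  rw [h3, Finset.sum_congr rfl fun i _ => h1 i] at h2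
  simp only [Finset.sum_const, Finset.card_univ, Fintype.card_fin, nsmul_eq_mul] at h2
  rw [eq_div_iff (by positivity)] at h2
  rw [← h2]
  ring

lemma AA_int {m : ℕ} (l : Eu (m + 1)) (hl : ‖l‖ = 1) : Integrable (AA l 1) := by
  refine quad_int _ (continuous_const.inner continuous_id).aestronglyMeasurable 1 fun z => ?_
  have := inner_abs_le l z hl
  nlinarith [sq_nonneg (‖z‖ - 1)]

lemma AA_int_zero {m : ℕ} (l : Eu (m + 1)) : ∫ z, AA l 1 z = 0 := by
  have h : ∫ z, AA l 1 (-z) = ∫ z, AA l 1 z := integral_neg_eq_self _ _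
  have h2 : ∀ z, AA l 1 (-z) = - AA l 1 z := by
    intro z; simp [AA, kk]
  simp only [h2, integral_neg] at h
  linarith

lemma AA_scale {m : ℕ} (l : Eu (m + 1)) {r : ℝ} (hr : 0 < r) (z : Eu (m + 1)) :
    r ^ (m + 1) * (r ^ 2 * AA l r (r • z)) = r⁻¹ * AA l 1 z := by
  have : kk r (((m + 1 : ℕ) : ℝ) / 2 + 2) (r • z) = (r ^ (m + 5))⁻¹ * kk 1 (((m + 1 : ℕ) : ℝ) / 2 + 2) z := by
    unfold kk
    rw [norm_smul, mul_pow, Real.norm_eq_abs, sq_abs, show r ^ 2 * ‖z‖ ^ 2 + r ^ 2 = r ^ 2 * (‖z‖ ^ 2 + 1 ^ 2) by ring,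
      Real.mul_rpow (by positivity) (by positivity)]
    congr 1
    rw [Real.rpow_neg (by positivity), ← Real.rpow_natCast r 2, ← Real.rpow_mul hr.le, ← Real.rpow_natCast]
    congr 2
    push_cast; ring
  unfold AA
  rw [this, real_inner_smul_right, show m + 5 = (m + 1) + 2 + 2 by ring, pow_add, pow_add]
  have : r ^ (m + 1) ≠ 0 := by positivity
  field_simp
  ring

lemma approx {m : ℕ} (w : Eu (m + 1) → ℝ) (hwm : AEStronglyMeasurable w volume) (hw1 : ∀ y, |w y| ≤ 1)
    (e : Eu (m + 1)) (G : Eu (m + 1)) (hd : HasGradientAt w G e) (l : Eu (m + 1)) (hl : ‖l‖ = 1) :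
    Tendsto (fun r => r ^ 2 * ∫ y, w y * AA l r (y - e)) (𝓝[>] 0)
      (𝓝 (∫ z, ⟪G, z⟫ * AA l 1 z)) := by
  -- linear bound
  have hfd := hd.hasFDerivAt
  obtain ⟨C, hC0, hC⟩ : ∃ C : ℝ, 0 ≤ C ∧ ∀ z, |w (e + z) - w e| ≤ C * ‖z‖ := by
    have hO := hfd.isBigO_sub
    obtain ⟨C, hC⟩ := hO.bound
    rw [Metric.eventually_nhds_iff] at hC
    obtain ⟨η, hη, hC⟩ := hC
    refine ⟨max C (2 / η), le_max_of_le_right (by positivity), fun z => ?_⟩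
    by_cases hz : ‖z‖ < η
    · have := hC (y := e + z) (by simpa [dist_eq_norm] using hz)
      simp only [add_sub_cancel_left, Real.norm_eq_abs] at this
      exact this.trans (mul_le_mul_of_nonneg_right (le_max_left _ _) (norm_nonneg _))
    · push Not at hz
      have h1 : |w (e + z) - w e| ≤ 2 := by
        refine (abs_sub _ _).trans ?_
        linarith [hw1 (e + z), hw1 e]
      calc _ ≤ (2 : ℝ) := h1
        _ = 2 / η * η := by field_simp
        _ ≤ max C (2 / η) * ‖z‖ := by
          gcongr
          exact le_max_right _ _
  have hrew : ∀ r : ℝ, 0 < r → r ^ 2 * ∫ y, w y * AA l r (y - e) =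
      ∫ z, (r⁻¹ * (w (e + r • z) - w e)) * AA l 1 z := by
    intro r hr
    have hmz : AEStronglyMeasurable (fun z => w (e + r • z)) volume := by
      have q2 : Measure.QuasiMeasurePreserving (fun z : Eu (m + 1) => e + r • z) volume volume := by
        have q1 : Measure.QuasiMeasurePreserving (fun z : Eu (m + 1) => r • z) volume volume := by
          refine ⟨(continuous_const_smul r).measurable, ?_⟩
          rw [Measure.map_addHaar_smul _ hr.ne']
          exact Measure.smul_absolutelyContinuous
        exact (measurePreserving_add_left volume e).quasiMeasurePreserving.comp q1
      exact hwm.comp_quasiMeasurePreserving q2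
    have i1 : Integrable (fun z => w (e + r • z) * AA l 1 z) := by
      refine (AA_int l hl).bdd_mul (c := 1) hmz (Eventually.of_forall fun z => ?_)
      simpa using hw1 (e + r • z)
    have i2 : Integrable (fun z => w e * AA l 1 z) := (AA_int l hl).const_mul _
    calc r ^ 2 * ∫ y, w y * AA l r (y - e) = r ^ 2 * ∫ y, w (e + y) * AA l r y := by
          rw [← integral_add_right_eq_self (fun y => w y * AA l r (y - e)) e]
          congr 2; ext y; rw [add_sub_cancel_right, add_comm]
      _ = r ^ 2 * (r ^ (m + 1) * ∫ z, w (e + r • z) * AA l r (r • z)) := by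
          rw [Measure.integral_comp_smul volume (fun y => w (e + y) * AA l r y) r]
          simp only [finrank_euclideanSpace, Fintype.card_fin, smul_eq_mul]
          rw [abs_of_pos (by positivity)]
          have : r ^ (m + 1) ≠ 0 := by positivity
          field_simp
      _ = ∫ z, r⁻¹ * (w (e + r • z) * AA l 1 z) := by
          rw [← mul_assoc, ← integral_const_mul]
          congr 1; ext z
          have := AA_scale l hr z
          linear_combination (w (e + r • z)) * this
      _ = ∫ z, (r⁻¹ * (w (e + r • z) * AA l 1 z) - r⁻¹ * (w e * AA l 1 z)) := by
          rw [integral_sub (i1.const_mul _) (i2.const_mul _), integral_const_mul _ (fun z => w e * AA l 1 z), integral_const_mul (w e), AA_int_zero]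
          simp
      _ = _ := by
          congr 1; ext z; ring
  have hDCT : Tendsto (fun r : ℝ => ∫ z, (r⁻¹ * (w (e + r • z) - w e)) * AA l 1 z) (𝓝[>] 0)
      (𝓝 (∫ z, ⟪G, z⟫ * AA l 1 z)) := by
    refine tendsto_integral_filter_of_dominated_convergence
      (fun z => C * (‖z‖ * (‖z‖ * kk 1 (((m + 1 : ℕ) : ℝ) / 2 + 2) z))) ?_ ?_ ?_ ?_
    · filter_upwards [self_mem_nhdsWithin] with r hr
      have hr : (0:ℝ) < r := hr
      have hmz : AEStronglyMeasurable (fun z => w (e + r • z)) volume := by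
        have q2 : Measure.QuasiMeasurePreserving (fun z : Eu (m + 1) => e + r • z) volume volume := by
          have q1 : Measure.QuasiMeasurePreserving (fun z : Eu (m + 1) => r • z) volume volume := by
            refine ⟨(continuous_const_smul r).measurable, ?_⟩
            rw [Measure.map_addHaar_smul _ hr.ne']
            exact Measure.smul_absolutelyContinuous
          exact (measurePreserving_add_left volume e).quasiMeasurePreserving.comp q1
        exact hwm.comp_quasiMeasurePreserving q2
      exact ((hmz.sub aestronglyMeasurable_const).const_mul _).mul (AA_int l hl).aestronglyMeasurable
    · filter_upwards [self_mem_nhdsWithin] with r hr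
      have hr : (0:ℝ) < r := hr
      refine Eventually.of_forall fun z => ?_
      rw [Real.norm_eq_abs, abs_mul, abs_mul, abs_of_pos (inv_pos.2 hr)]
      have h1 := hC (r • z)
      rw [norm_smul, Real.norm_eq_abs, abs_of_pos hr] at h1
      have h2 : r⁻¹ * |w (e + r • z) - w e| ≤ C * ‖z‖ := by
        rw [inv_mul_le_iff₀ hr]; linarith
      have h3 : |AA l 1 z| ≤ ‖z‖ * kk 1 (((m + 1 : ℕ) : ℝ) / 2 + 2) z := by
        unfold AA
        rw [abs_mul, abs_of_nonneg (kk_nonneg _ _ _)]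
        exact mul_le_mul_of_nonneg_right (inner_abs_le l z hl) (kk_nonneg _ _ _)
      calc _ ≤ (C * ‖z‖) * (‖z‖ * kk 1 (((m + 1 : ℕ) : ℝ) / 2 + 2) z) :=
            mul_le_mul h2 h3 (abs_nonneg _) (by positivity)
        _ = _ := by ring
    · refine Integrable.const_mul ?_ C
      have := quad_int (m := m) (fun z => ‖z‖ * ‖z‖) (continuous_norm.mul continuous_norm).aestronglyMeasurable 1
        (fun z => by rw [abs_of_nonneg (by positivity)]; nlinarith)
      refine this.congr (Eventually.of_forall fun z => ?_)
      simp only; ring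
    · refine Eventually.of_forall fun z => ?_
      refine Tendsto.mul_const _ ?_
      have hl' : HasDerivAt (fun r : ℝ => w (e + r • z)) ⟪G, z⟫ 0 := by
        have h1 : HasDerivAt (fun r : ℝ => e + r • z) z 0 := by
          simpa using ((hasDerivAt_id (0:ℝ)).smul_const z).const_add e
        have hfd' : HasFDerivAt w (InnerProductSpace.toDual ℝ _ G) (e + (0:ℝ) • z) := by simpa using hfd
        have := hfd'.comp_hasDerivAt (0:ℝ) h1
        simp only [InnerProductSpace.toDual_apply_apply] at this
        exact this
      have := hl'.tendsto_slope_zero_right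
      simpa using this
  refine hDCT.congr' ?_
  filter_upwards [self_mem_nhdsWithin] with r hr
  exact (hrew r hr).symm


open scoped Topology ENNReal

def PP {m : ℕ} (t : ℝ) (x : Fin m → ℝ) : Eu (m + 1) :=
  WithLp.toLp 2 (Fin.insertNth (0 : Fin (m + 1)) t x)

def ZZ {m : ℕ} (x : Fin m → ℝ) : Eu (m + 1) := PP 0 x - e0 m

lemma PP_zero {m : ℕ} (t : ℝ) (x : Fin m → ℝ) : PP t x 0 = t := by
  simp [PP]

lemma PP_succ {m : ℕ} (t : ℝ) (x : Fin m → ℝ) (i : Fin m) : PP t x i.succ = x i := by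
  simp [PP]

lemma ZZ_zero {m : ℕ} (x : Fin m → ℝ) : ZZ x 0 = -1 := by
  simp [ZZ, PP_zero, e0_zero]

lemma ZZ_succ {m : ℕ} (x : Fin m → ℝ) (i : Fin m) : ZZ x i.succ = x i := by
  simp [ZZ, PP_succ, e0]

lemma PP_smul {m : ℕ} (t : ℝ) (x : Fin m → ℝ) : PP t ((-t) • x) = (-t) • ZZ x := by
  ext i
  refine Fin.cases ?_ (fun j => ?_) i
  · simp [PP_zero, ZZ_zero]
  · simp [PP_succ, ZZ_succ]

lemma PP_cont {m : ℕ} : Continuous (fun p : ℝ × (Fin m → ℝ) => PP p.1 p.2) := by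
  unfold PP
  refine (PiLp.continuous_toLp 2 _).comp ?_
  refine continuous_pi fun i => ?_
  refine Fin.cases ?_ (fun j => ?_) i
  · simpa using continuous_fst
  · simp only [Fin.insertNth_zero', Fin.cons_succ]
    exact (continuous_apply j).comp continuous_snd

lemma ZZ_cont {m : ℕ} : Continuous (ZZ (m := m)) := by
  unfold ZZ
  exact (PP_cont.comp (continuous_const.prodMk continuous_id)).sub continuous_const

lemma ZZ_norm {m : ℕ} (x : Fin m → ℝ) : ‖ZZ x‖ ^ 2 = 1 + ‖(WithLp.toLp 2 x : Eu m)‖ ^ 2 := by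
  rw [EuclideanSpace.real_norm_sq_eq, EuclideanSpace.real_norm_sq_eq, Fin.sum_univ_succ]
  simp [ZZ_zero, ZZ_succ]

lemma ZZ_norm_pos {m : ℕ} (x : Fin m → ℝ) : 0 < ‖ZZ x‖ := by
  have := ZZ_norm x
  have h : 0 < ‖ZZ x‖ ^ 2 := by rw [this]; positivity
  rcases (norm_nonneg (ZZ x)).lt_or_eq with h1 | h1
  · exact h1
  · rw [← h1] at h; simp at h

lemma lint_split {m : ℕ} (f : Eu (m + 1) → ℝ≥0∞) (hf : Measurable f) :
    ∫⁻ z, f z = ∫⁻ t : ℝ, ∫⁻ x : Fin m → ℝ, f (PP t x) := by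
  have h1 := (PiLp.volume_preserving_toLp (Fin (m + 1))).lintegral_comp hf
  have h2 := (volume_preserving_piFinSuccAbove (fun _ : Fin (m + 1) => ℝ) 0).symm.lintegral_comp
    (hf.comp (PiLp.continuous_toLp 2 (fun _ : Fin (m + 1) => ℝ)).measurable)
  rw [← h1]
  refine h2.symm.trans ?_
  have hm : Measurable (fun p : ℝ × (Fin m → ℝ) => f (PP p.1 p.2)) := hf.comp PP_cont.measurable
  exact (lintegral_prod _ hm.aemeasurable)

lemma lint_smul {E : Type*} [NormedAddCommGroup E] [NormedSpace ℝ E] [MeasurableSpace E] [BorelSpace E]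
    [FiniteDimensional ℝ E] (μ : Measure E) [μ.IsAddHaarMeasure] (f : E → ℝ≥0∞) (hf : Measurable f) {r : ℝ} (hr : r ≠ 0) :
    ∫⁻ x, f x ∂μ = ENNReal.ofReal (|r| ^ Module.finrank ℝ E) * ∫⁻ x, f (r • x) ∂μ := by
  have h := lintegral_map (μ := μ) hf (measurable_const_smul r)
  rw [Measure.map_addHaar_smul μ hr, lintegral_smul_measure] at h
  have h : _ = ∫⁻ x, f (r • x) ∂μ := h
  rw [← h, smul_eq_mul, ← mul_assoc, ← ENNReal.ofReal_mul (by positivity), abs_inv, abs_pow,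
    mul_inv_cancel₀ (by positivity), ENNReal.ofReal_one, one_mul]

lemma cone {m : ℕ} (f : Eu (m + 1) → ℝ≥0∞) (hf : Measurable f)
    (hh : ∀ s : ℝ, s ≠ 0 → ∀ z, f (s • z) = f z) :
    ∫⁻ z, f z * (ball (0 : ℝ) 1).indicator 1 ‖z‖ =
      (∫⁻ t : ℝ, ENNReal.ofReal (|t| ^ m) * (ball (0 : ℝ) 1).indicator 1 |t|) *
        ∫⁻ x : Fin m → ℝ, f (ZZ x) * ENNReal.ofReal ((‖ZZ x‖ ^ (m + 1))⁻¹) := by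
  have hW : Measurable ((ball (0 : ℝ) 1).indicator (1 : ℝ → ℝ≥0∞)) := measurable_one.indicator measurableSet_ball
  have hZm : Measurable (ZZ (m := m)) := ZZ_cont.measurable
  set W : ℝ → ℝ≥0∞ := (ball (0 : ℝ) 1).indicator (1 : ℝ → ℝ≥0∞) with hWd
  rw [lint_split (fun z => f z * W ‖z‖) (hf.mul (hW.comp measurable_norm))]
  have e1 : ∫⁻ t : ℝ, ∫⁻ x : Fin m → ℝ, f (PP t x) * W ‖PP t x‖ =
      ∫⁻ t : ℝ, ∫⁻ x : Fin m → ℝ, f (ZZ x) * (ENNReal.ofReal (|t| ^ m) * W (|t| * ‖ZZ x‖)) := by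
    refine lintegral_congr_ae ?_
    have : ∀ᵐ t : ℝ, t ≠ 0 := by simp [ae_iff]
    filter_upwards [this] with t ht
    have hPm : Measurable (fun x : Fin m → ℝ => PP t x) := (PP_cont.comp (continuous_const.prodMk continuous_id)).measurable
    rw [lint_smul volume (fun x => f (PP t x) * W ‖PP t x‖)
      ((hf.comp hPm).mul (hW.comp hPm.norm)) (neg_ne_zero.2 ht), ← lintegral_const_mul]
    · refine lintegral_congr fun x => ?_
      rw [PP_smul, hh _ (neg_ne_zero.2 ht), norm_smul, Real.norm_eq_abs, abs_neg, Module.finrank_fin_fun]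
      ring
    · have : Measurable (fun x : Fin m → ℝ => PP t ((-t) • x)) := hPm.comp (measurable_const_smul (-t))
      exact (hf.comp this).mul (hW.comp this.norm)
  rw [e1, lintegral_lintegral_swap, ← lintegral_const_mul]
  · refine lintegral_congr fun x => ?_
    have hN := ZZ_norm_pos x
    rw [lintegral_const_mul, lint_smul volume (fun t => ENNReal.ofReal (|t| ^ m) * W |t|) _ hN.ne']
    · have : ∫⁻ t : ℝ, ENNReal.ofReal (|‖ZZ x‖ • t| ^ m) * W |‖ZZ x‖ • t| = 
         ENNReal.ofReal (‖ZZ x‖ ^ m) * ∫⁻ t : ℝ, ENNReal.ofReal (|t| ^ m) * W (|t| * ‖ZZ x‖) := by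
        rw [← lintegral_const_mul]
        · refine lintegral_congr fun t => ?_
          rw [smul_eq_mul, abs_mul, abs_of_pos hN, mul_pow, ENNReal.ofReal_mul (by positivity), mul_comm |t|, mul_assoc]
        · exact (by fun_prop : Measurable (fun t : ℝ => ENNReal.ofReal (|t| ^ m))).mul
            (hW.comp (by fun_prop))
      rw [this, Module.finrank_self, pow_one, abs_of_pos hN]
      set I := ∫⁻ t : ℝ, ENNReal.ofReal (|t| ^ m) * W (|t| * ‖ZZ x‖)
      have : ENNReal.ofReal ‖ZZ x‖ * ENNReal.ofReal (‖ZZ x‖ ^ m) * ENNReal.ofReal ((‖ZZ x‖ ^ (m + 1))⁻¹) = 1 := by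
        rw [← ENNReal.ofReal_mul (by positivity), ← ENNReal.ofReal_mul (by positivity), ← pow_succ', mul_inv_cancel₀ (by positivity),
          ENNReal.ofReal_one]
      calc f (ZZ x) * I = f (ZZ x) * I * 1 := by rw [mul_one]
        _ = _ := by rw [← this]; ring
    · exact (by fun_prop : Measurable (fun t : ℝ => ENNReal.ofReal (|t| ^ m))).mul
            (hW.comp (by fun_prop))
    · exact (by fun_prop : Measurable (fun t : ℝ => ENNReal.ofReal (|t| ^ m))).mul
            (hW.comp (by fun_prop))
  · exact (hf.comp hZm).mul (by fun_prop)
  · refine Measurable.aemeasurable ?_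
    refine Measurable.mul ?_ (Measurable.mul ?_ ?_)
    · exact hf.comp (hZm.comp measurable_snd)
    · fun_prop
    · refine hW.comp ?_
      exact (measurable_fst.norm).mul (hZm.comp measurable_snd).norm

def ff {m : ℕ} (p z : Eu (m + 1)) : ℝ := |1 - ((m + 1 : ℕ) : ℝ) * (⟪p, z⟫ ^ 2 / ‖z‖ ^ 2)|

def JJ {m : ℕ} (p : Eu (m + 1)) : ℝ≥0∞ :=
  ∫⁻ x : Fin m → ℝ, ENNReal.ofReal (ff p (ZZ x)) * ENNReal.ofReal ((‖ZZ x‖ ^ (m + 1))⁻¹)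

lemma ff_nonneg {m : ℕ} (p z : Eu (m + 1)) : 0 ≤ ff p z := abs_nonneg _

lemma ff_meas {m : ℕ} (p : Eu (m + 1)) : Measurable (ff p) := by
  unfold ff
  have : Measurable (fun z : Eu (m + 1) => ⟪p, z⟫) := (continuous_const.inner continuous_id).measurable
  have h2 : Measurable (fun z : Eu (m + 1) => ‖z‖) := measurable_norm
  exact (measurable_const.sub (measurable_const.mul ((this.pow_const 2).div (h2.pow_const 2)))).abs

lemma JJ_const {m : ℕ} (p q : Eu (m + 1)) (hp : ‖p‖ = 1) (hq : ‖q‖ = 1) : JJ p = JJ q := by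
  have hc : ∀ p : Eu (m + 1), ∫⁻ z, ENNReal.ofReal (ff p z) * (ball (0 : ℝ) 1).indicator 1 ‖z‖ =
      (∫⁻ t : ℝ, ENNReal.ofReal (|t| ^ m) * (ball (0 : ℝ) 1).indicator 1 |t|) * JJ p := by
    intro p
    refine cone _ (ff_meas p).ennreal_ofReal fun s hs z => ?_
    congr 1
    unfold ff
    rw [real_inner_smul_right, norm_smul, mul_pow, mul_pow, Real.norm_eq_abs, sq_abs,
      mul_div_mul_left _ _ (by positivity)]
  have hrot : ∫⁻ z, ENNReal.ofReal (ff p z) * (ball (0 : ℝ) 1).indicator 1 ‖z‖ =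
      ∫⁻ z, ENNReal.ofReal (ff q z) * (ball (0 : ℝ) 1).indicator 1 ‖z‖ := by
    obtain ⟨L, hL⟩ := exists_iso p q (by rw [hp, hq])
    rw [← L.measurePreserving.lintegral_comp_emb (L.toHomeomorph.measurableEmbedding)
      (fun z => ENNReal.ofReal (ff q z) * (ball (0 : ℝ) 1).indicator 1 ‖z‖)]
    refine lintegral_congr fun z => ?_
    unfold ff
    rw [← hL, LinearIsometryEquiv.inner_map_map, LinearIsometryEquiv.norm_map]
  rw [hc, hc] at hrot
  have hW : Measurable ((ball (0 : ℝ) 1).indicator (1 : ℝ → ℝ≥0∞)) := measurable_one.indicator measurableSet_ball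
  have hm : Measurable (fun t : ℝ => ENNReal.ofReal (|t| ^ m) * (ball (0 : ℝ) 1).indicator (1 : ℝ → ℝ≥0∞) |t|) := 
    (by fun_prop : Measurable (fun t : ℝ => ENNReal.ofReal (|t| ^ m))).mul (hW.comp (by fun_prop))
  refine (ENNReal.mul_right_inj ?_ ?_).1 hrot
  · intro h0
    rw [lintegral_eq_zero_iff hm] at h0
    have h1 : volume (Set.Ioo (0 : ℝ) 1) = 0 := by
      refine measure_mono_null (fun t ht => ?_) h0
      have ht' : |t| ∈ ball (0 : ℝ) 1 := by
        simp only [mem_ball, dist_zero_right, Real.norm_eq_abs, abs_abs]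
        rw [abs_of_pos ht.1]; exact ht.2
      simp only [Set.mem_compl_iff, Set.mem_ofPred_eq, Set.indicator_of_mem ht', Pi.zero_apply, Pi.one_apply, mul_one,
        ENNReal.ofReal_eq_zero, not_le]
      have := ht.1
      positivity
    simp at h1
  · refine ne_top_of_le_ne_top (b := volume (ball (0:ℝ) 1)) (by simp) ?_
    rw [← lintegral_indicator_one measurableSet_ball]
    refine lintegral_mono fun t => ?_
    by_cases ht : t ∈ ball (0 : ℝ) 1
    · have ht' : |t| ∈ ball (0 : ℝ) 1 := by simpa using ht
      simp only [Set.indicator_of_mem ht', Set.indicator_of_mem ht, Pi.one_apply, mul_one]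
      rw [ENNReal.ofReal_le_one]
      refine pow_le_one₀ (abs_nonneg _) ?_
      simpa using le_of_lt (by simpa using ht : |t| < 1)
    · have ht' : |t| ∉ ball (0 : ℝ) 1 := by simpa using ht
      simp [Set.indicator_of_notMem ht']

lemma unit_ex {n : ℕ} (a e : Eu n) (he : ‖e‖ = 1) : ∃ p : Eu n, ‖p‖ = 1 ∧ a = ‖a‖ • p := by
  by_cases h : a = 0
  · exact ⟨e, he, by simp [h]⟩
  · refine ⟨‖a‖⁻¹ • a, ?_, ?_⟩
    · rw [norm_smul, norm_inv, norm_norm, inv_mul_cancel₀ (norm_ne_zero_iff.2 h)]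
    · rw [smul_smul, mul_inv_cancel₀ (norm_ne_zero_iff.2 h), one_smul]

lemma mixed_le {m : ℕ} (l : Eu (m + 1)) (hl : ‖l‖ = 1) :
    ∫⁻ x : Fin m → ℝ, ENNReal.ofReal |l 0 - ((m + 1 : ℕ) : ℝ) * (⟪e0 m, ZZ x⟫ * ⟪l, ZZ x⟫ / ‖ZZ x‖ ^ 2)| * 
      ENNReal.ofReal ((‖ZZ x‖ ^ (m + 1))⁻¹) ≤ JJ (e0 m) := by
  obtain ⟨p, hp, hpe⟩ := unit_ex (e0 m + l) (e0 m) (norm_e0 m)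
  obtain ⟨q, hq, hqe⟩ := unit_ex (e0 m - l) (e0 m) (norm_e0 m)
  set α := ‖e0 m + l‖ with hα
  set β := ‖e0 m - l‖ with hβ
  have hA : α ^ 2 = 2 + 2 * l 0 := by
    rw [hα, norm_add_sq_real, inner_e0', norm_e0, hl]; ring
  have hB : β ^ 2 = 2 - 2 * l 0 := by
    rw [hβ, norm_sub_sq_real, inner_e0', norm_e0, hl]; ring
  have key : ∀ z : Eu (m + 1), |l 0 - ((m + 1 : ℕ) : ℝ) * (⟪e0 m, z⟫ * ⟪l, z⟫ / ‖z‖ ^ 2)| ≤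
      α ^ 2 / 4 * ff p z + β ^ 2 / 4 * ff q z := by
    intro z
    have i1 : ⟪e0 m, z⟫ + ⟪l, z⟫ = α * ⟪p, z⟫ := by
      rw [← inner_add_left, ← real_inner_smul_left, ← hpe]
    have i2 : ⟪e0 m, z⟫ - ⟪l, z⟫ = β * ⟪q, z⟫ := by
      rw [← inner_sub_left, ← real_inner_smul_left, ← hqe]
    have i3 : ⟪e0 m, z⟫ * ⟪l, z⟫ = (α ^ 2 * ⟪p, z⟫ ^ 2 - β ^ 2 * ⟪q, z⟫ ^ 2) / 4 := by
      rw [← mul_pow, ← mul_pow, ← i1, ← i2]; ring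
    have i4 : l 0 - ((m + 1 : ℕ) : ℝ) * (⟪e0 m, z⟫ * ⟪l, z⟫ / ‖z‖ ^ 2) = 
        α ^ 2 / 4 * (1 - ((m + 1 : ℕ) : ℝ) * (⟪p, z⟫ ^ 2 / ‖z‖ ^ 2)) - β ^ 2 / 4 * (1 - ((m + 1 : ℕ) : ℝ) * (⟪q, z⟫ ^ 2 / ‖z‖ ^ 2)) := by
      rw [i3]
      linear_combination (-1/4) * hA + 1/4 * hB
    rw [i4]
    refine (abs_sub _ _).trans ?_
    rw [abs_mul, abs_mul, abs_of_nonneg (by positivity : 0 ≤ α ^ 2 / 4), abs_of_nonneg (by positivity : 0 ≤ β ^ 2 / 4)]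
    exact le_rfl
  have hZm : Measurable (ZZ (m := m)) := ZZ_cont.measurable
  have hJm : ∀ p : Eu (m + 1), Measurable fun x : Fin m → ℝ => ENNReal.ofReal (ff p (ZZ x)) * ENNReal.ofReal ((‖ZZ x‖ ^ (m + 1))⁻¹) := by
    intro p
    exact ((ff_meas p).comp hZm).ennreal_ofReal.mul (by fun_prop)
  calc _ ≤ ∫⁻ x : Fin m → ℝ, (ENNReal.ofReal (α ^ 2 / 4) * (ENNReal.ofReal (ff p (ZZ x)) * ENNReal.ofReal ((‖ZZ x‖ ^ (m + 1))⁻¹)) +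
        ENNReal.ofReal (β ^ 2 / 4) * (ENNReal.ofReal (ff q (ZZ x)) * ENNReal.ofReal ((‖ZZ x‖ ^ (m + 1))⁻¹))) := by
        refine lintegral_mono fun x => ?_
        dsimp only
        rw [← mul_assoc, ← mul_assoc, ← add_mul]
        refine mul_le_mul_left ?_ _
        rw [← ENNReal.ofReal_mul (by positivity), ← ENNReal.ofReal_mul (by positivity), ← ENNReal.ofReal_add
          (mul_nonneg (by positivity) (ff_nonneg _ _)) (mul_nonneg (by positivity) (ff_nonneg _ _))]
        exact ENNReal.ofReal_le_ofReal (key _)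
    _ = ENNReal.ofReal (α ^ 2 / 4) * JJ p + ENNReal.ofReal (β ^ 2 / 4) * JJ q := by
        rw [lintegral_add_left ((hJm p).const_mul _), lintegral_const_mul _ (hJm p), lintegral_const_mul _ (hJm q)]
        rfl
    _ = JJ (e0 m) := by
        rw [JJ_const p (e0 m) hp (norm_e0 m), JJ_const q (e0 m) hq (norm_e0 m), ← add_mul, ← ENNReal.ofReal_add (by positivity) (by positivity),
          hA, hB, show (2 + 2 * l 0) / 4 + (2 - 2 * l 0) / 4 = 1 by ring, ENNReal.ofReal_one, one_mul]


open scoped Topology ENNReal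

lemma radial_J (k : ℕ) : ∫ y in Set.Ioi (0:ℝ), y ^ k *
      (|1 - ((k + 2 : ℕ) : ℝ) * (1 / (1 + y ^ 2))| * (1 + y ^ 2) ^ (-(((k + 2 : ℕ) : ℝ) / 2))) =
    2 * (((k + 1 : ℕ) : ℝ) ^ (((k + 1 : ℕ) : ℝ) / 2) * ((k + 2 : ℕ) : ℝ) ^ (-(((k + 2 : ℕ) : ℝ) / 2))) := by
  set a : ℝ := ((k + 2 : ℕ) : ℝ) / 2 with ha
  have ha0 : 0 < a := by positivity
  set F : ℝ → ℝ := fun y => y ^ (k + 1) * (1 + y ^ 2) ^ (-a) with hF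
  set F' : ℝ → ℝ := fun y => y ^ k * ((1 - ((k + 2 : ℕ) : ℝ) * (1 / (1 + y ^ 2))) * (1 + y ^ 2) ^ (-a)) with hF'
  set s : ℝ := √((k + 1 : ℕ) : ℝ) with hs
  have hs2 : s ^ 2 = ((k + 1 : ℕ) : ℝ) := Real.sq_sqrt (by positivity)
  have hs0 : 0 ≤ s := Real.sqrt_nonneg _
  have key : ∀ x : ℝ, HasDerivAt F (-F' x) x := by
    intro x
    have hx1 : (0:ℝ) < 1 + x ^ 2 := by positivity
    have d1 := hasDerivAt_pow (k + 1) x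
    have d2 : HasDerivAt (fun y : ℝ => 1 + y ^ 2) (2 * x) x := by
      simpa using (hasDerivAt_pow 2 x).const_add (1 : ℝ)
    have d3 := d2.rpow_const (p := -a) (Or.inl hx1.ne')
    convert! (d1.mul d3) using 1
    have e1 : (1 + x ^ 2) ^ (-a) = (1 + x ^ 2) * (1 + x ^ 2) ^ (-a - 1) := by
      rw [Real.rpow_sub hx1, Real.rpow_one]; field_simp
    simp only [hF']
    rw [e1]
    generalize (1 + x ^ 2) ^ (-a - 1) = t
    rw [ha]
    push_cast
    field_simp
    ring
  have lim : Tendsto F atTop (𝓝 0) := by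
    have h1 := (radial_tendsto a ha0).mul tendsto_inv_atTop_zero
    rw [mul_zero] at h1
    refine h1.congr' ?_
    filter_upwards [eventually_gt_atTop 0] with y hy
    rw [show 2 * a = ((k + 2 : ℕ) : ℝ) by rw [ha]; push_cast; ring, Real.rpow_natCast, hF, add_comm (y ^ 2)]
    field_simp
    ring
  have sg : ∀ x : ℝ, 1 - ((k + 2 : ℕ) : ℝ) * (1 / (1 + x ^ 2)) = (x ^ 2 - s ^ 2) / (1 + x ^ 2) := by
    intro x
    have hx1 : (0:ℝ) < 1 + x ^ 2 := by positivity
    rw [hs2]; push_cast; field_simp; ring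
  have sg1 : ∀ x : ℝ, 0 ≤ x → s ≤ x → 0 ≤ F' x ∧ |1 - ((k + 2 : ℕ) : ℝ) * (1 / (1 + x ^ 2))| = 1 - ((k + 2 : ℕ) : ℝ) * (1 / (1 + x ^ 2)) := by
    intro x h0 hx
    have : 0 ≤ 1 - ((k + 2 : ℕ) : ℝ) * (1 / (1 + x ^ 2)) := by
      rw [sg]; exact div_nonneg (by nlinarith) (by positivity)
    refine ⟨?_, abs_of_nonneg this⟩
    simp only [hF']
    positivity
  have sg2 : ∀ x : ℝ, 0 ≤ x → x ≤ s → |1 - ((k + 2 : ℕ) : ℝ) * (1 / (1 + x ^ 2))| = -(1 - ((k + 2 : ℕ) : ℝ) * (1 / (1 + x ^ 2))) := by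
    intro x h0 hx
    refine abs_of_nonpos ?_
    rw [sg]; exact div_nonpos_of_nonpos_of_nonneg (by nlinarith) (by positivity)
  have hF'c : Continuous F' := by
    simp only [hF']
    refine (continuous_pow k).mul (Continuous.mul ?_ ?_)
    · refine continuous_const.sub (continuous_const.mul (continuous_const.div (by fun_prop) fun x => by positivity))
    · exact Continuous.rpow_const (by fun_prop) fun x => Or.inl (by positivity)
  have keyI : ∀ x ∈ Set.Ici s, HasDerivAt (fun x => - F x) (F' x) x := fun x _ => by
    have h := (key x).neg
    rw [neg_neg] at h
    exact h
  have lim' : Tendsto (fun x => - F x) atTop (𝓝 0) := by simpa using lim.neg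
  have nn : ∀ x ∈ Set.Ioi s, 0 ≤ F' x := fun x hx => (sg1 x (hs0.trans (le_of_lt hx)) (le_of_lt hx)).1
  have I2 := integral_Ioi_of_hasDerivAt_of_nonneg' keyI nn lim'
  have I2i := integrableOn_Ioi_deriv_of_nonneg' keyI nn lim'
  have I1 : ∫ x in (0:ℝ)..s, -F' x = F s - F 0 :=
    intervalIntegral.integral_eq_sub_of_hasDerivAt (fun x _ => key x) (hF'c.neg.intervalIntegrable _ _)
  rw [intervalIntegral.integral_of_le hs0] at I1
  set f : ℝ → ℝ := fun y => y ^ k *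
      (|1 - ((k + 2 : ℕ) : ℝ) * (1 / (1 + y ^ 2))| * (1 + y ^ 2) ^ (-a)) with hf
  have E1 : Set.EqOn f (fun x => -F' x) (Set.Ioc 0 s) := by
    intro x hx
    simp only [hf, hF']
    rw [sg2 x hx.1.le hx.2]; ring
  have E2 : Set.EqOn f F' (Set.Ioi s) := by
    intro x hx
    simp only [hf, hF']
    rw [(sg1 x (hs0.trans (le_of_lt hx)) (le_of_lt hx)).2]
  rw [← Set.Ioc_union_Ioi_eq_Ioi hs0, setIntegral_union Set.Ioc_disjoint_Ioi_same measurableSet_Ioi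
    ((hF'c.neg.integrableOn_Ioc).congr_fun E1.symm measurableSet_Ioc) (I2i.congr_fun E2.symm measurableSet_Ioi),
    setIntegral_congr_fun measurableSet_Ioc E1, setIntegral_congr_fun measurableSet_Ioi E2, I1, I2]
  have Fs : F s = ((k + 1 : ℕ) : ℝ) ^ (((k + 1 : ℕ) : ℝ) / 2) * ((k + 2 : ℕ) : ℝ) ^ (-a) := by
    simp only [hF]
    rw [hs2, Real.rpow_div_two_eq_sqrt _ (by positivity), Real.rpow_natCast]
    congr 2
    push_cast; ring
  have F0 : F 0 = 0 := by simp [hF]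
  rw [← Fs, F0]; ring

lemma JJ_val (k : ℕ) : JJ (e0 (k + 1)) = ENNReal.ofReal (Cconst (k + 2) * sphereArea (k + 2) / 2) := by
  set g : ℝ → ℝ := fun y => |1 - ((k + 2 : ℕ) : ℝ) * (1 / (1 + y ^ 2))| * (1 + y ^ 2) ^ (-(((k + 2 : ℕ) : ℝ) / 2)) with hg
  have hgn : ∀ y, 0 ≤ g y := fun y => by simp only [hg]; positivity
  have hgc : Continuous g := by
    simp only [hg]
    refine Continuous.mul (Continuous.abs ?_) ?_
    · refine continuous_const.sub (continuous_const.mul (continuous_const.div (by fun_prop) fun x => by positivity))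
    · exact Continuous.rpow_const (by fun_prop) fun x => Or.inl (by positivity)
  have h1 : JJ (e0 (k + 1)) = ∫⁻ y : Eu (k + 1), ENNReal.ofReal (g ‖y‖) := by
    have hm : Measurable (fun y : Eu (k + 1) => ENNReal.ofReal (g ‖y‖)) :=
      (hgc.comp continuous_norm).measurable.ennreal_ofReal
    rw [← (PiLp.volume_preserving_toLp (Fin (k + 1))).lintegral_comp hm]
    unfold JJ
    refine lintegral_congr fun x => ?_
    have hN := ZZ_norm_pos x
    rw [← ENNReal.ofReal_mul (ff_nonneg _ _)]
    congr 1
    simp only [hg, ff]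
    rw [inner_e0', ZZ_zero, ← ZZ_norm, Real.rpow_neg (by positivity), ← Real.rpow_natCast ‖ZZ x‖ 2, ← Real.rpow_mul hN.le,
      ← Real.rpow_natCast ‖ZZ x‖ (k + 1 + 1)]
    norm_num
    rw [show 2 * (((k:ℝ) + 2) / 2) = k + 1 + 1 by ring, show (k:ℝ) + 2 = k + 1 + 1 by ring]
  have hint : Integrable (fun y : Eu (k + 1) => g ‖y‖) := by
    have := (integrable_rpow_neg_one_add_norm_sq (E := Eu (k + 1)) (μ := volume)
      (r := ((k + 2 : ℕ) : ℝ)) (by simp)).const_mul (1 + ((k + 2 : ℕ) : ℝ))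
    refine this.mono' (hgc.comp continuous_norm).aestronglyMeasurable (Eventually.of_forall fun y => ?_)
    rw [Real.norm_eq_abs, abs_of_nonneg (hgn _)]
    simp only [hg, neg_div]
    refine mul_le_mul_of_nonneg_right ?_ (by positivity)
    refine (abs_sub _ _).trans ?_
    rw [abs_one, abs_of_nonneg (by positivity)]
    have : 1 / (1 + ‖y‖ ^ 2) ≤ 1 := by
      rw [div_le_one (by positivity)]; nlinarith [sq_nonneg ‖y‖]
    nlinarith [(Nat.cast_nonneg (k+2) : (0:ℝ) ≤ ((k+2:ℕ):ℝ))]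
  rw [h1, ← ofReal_integral_eq_lintegral_ofReal hint (Eventually.of_forall fun y => hgn _)]
  congr 1
  rw [integral_fun_norm_addHaar (volume : Measure (Eu (k + 1))) g]
  simp only [finrank_euclideanSpace, Fintype.card_fin, smul_eq_mul, nsmul_eq_mul, Nat.add_sub_cancel]
  rw [← mul_assoc, ← sphereArea_eq, hg, radial_J]
  unfold Cconst
  have hω : sphereArea (k + 2) ≠ 0 := (sphereArea_pos (k + 1)).ne'
  rw [show k + 2 - 1 = k + 1 by rfl, show ((k + 2 : ℕ) : ℝ) - 1 = ((k + 1 : ℕ) : ℝ) by push_cast; ring,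
    Real.rpow_neg (by positivity)]
  have : ((k + 2 : ℕ) : ℝ) ^ (((k + 2 : ℕ) : ℝ) / 2) ≠ 0 := by positivity
  field_simp
  ring


open scoped Topology ENNReal

lemma kk_tendsto {n : ℕ} (a : ℝ) (z : Eu n) (hz : 0 < ‖z‖) :
    Tendsto (fun r => kk r a z) (𝓝[>] 0) (𝓝 ((‖z‖ ^ 2) ^ (-a))) := by
  unfold kk
  have h1 : Tendsto (fun r : ℝ => ‖z‖ ^ 2 + r ^ 2) (𝓝[>] 0) (𝓝 (‖z‖ ^ 2)) := by
    have : Continuous (fun r : ℝ => ‖z‖ ^ 2 + r ^ 2) := by fun_prop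
    have h := (this.tendsto 0).mono_left (nhdsWithin_le_nhds (s := Set.Ioi (0:ℝ)))
    simpa using h
  exact h1.rpow_const (Or.inl (by positivity))

lemma face_lim (k : ℕ) (K : ℝ) (l : Eu (k + 2)) (hl : ‖l‖ = 1) : ∃ J : ℝ, J ≤ Cconst (k + 2) * sphereArea (k + 2) ∧
    Tendsto (fun r : ℝ => ∫ x in Set.Icc (fun _ : Fin (k + 1) => -K) (fun _ => K),
        |pd 0 (gg l r) (WithLp.toLp 2 (Fin.insertNth (0 : Fin (k + 2)) (0 : ℝ) x))|) (𝓝[>] 0) (𝓝 J) := by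
  set n : ℝ := ((k + 1 + 1 : ℕ) : ℝ) with hn
  have hn0 : 0 < n := by positivity
  set h : (Fin (k + 1) → ℝ) → ℝ := fun x =>
    |l 0 - n * (⟪e0 (k + 1), ZZ x⟫ * ⟪l, ZZ x⟫ / ‖ZZ x‖ ^ 2)| * (‖ZZ x‖ ^ (k + 1 + 1))⁻¹ with hh
  have hZm : Measurable (ZZ (m := k + 1)) := ZZ_cont.measurable
  have hhm : Measurable h := by
    have i1 : ∀ l : Eu (k + 2), Measurable (fun x : Fin (k + 1) → ℝ => ⟪l, ZZ x⟫) := fun l =>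
      (continuous_const.inner continuous_id).measurable.comp hZm
    have i2 : Measurable (fun x : Fin (k + 1) → ℝ => ‖ZZ x‖) := hZm.norm
    exact (measurable_const.sub (measurable_const.mul (((i1 _).mul (i1 _)).div (i2.pow_const 2)))).abs.mul
      (i2.pow_const _).inv
  have face : ∀ r : ℝ, 0 < r → ∀ x : Fin (k + 1) → ℝ, pd 0 (gg l r) (WithLp.toLp 2 (Fin.insertNth (0 : Fin (k + 2)) (0 : ℝ) x)) =
      2 * (l 0 * kk r (n / 2) (ZZ x) + n * (⟪l, ZZ x⟫ * kk r (n / 2 + 1) (ZZ x))) := by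
    intro r hr x
    exact pd_gg_face l hr (PP 0 x) (PP_zero 0 x)
  have hN1 : ∀ x : Fin (k + 1) → ℝ, 1 ≤ ‖ZZ x‖ := by
    intro x
    have := ZZ_norm x
    nlinarith [sq_nonneg ‖(WithLp.toLp 2 x : Eu (k + 1))‖, ZZ_norm_pos x]
  refine ⟨∫ x in Set.Icc (fun _ : Fin (k + 1) => -K) (fun _ => K), 2 * h x, ?_, ?_⟩
  · rw [integral_const_mul]
    have hle : ∫ x in Set.Icc (fun _ : Fin (k + 1) => -K) (fun _ => K), h x ≤ Cconst (k + 2) * sphereArea (k + 2) / 2 := by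
      have hJ : ENNReal.ofReal (Cconst (k + 2) * sphereArea (k + 2) / 2) = JJ (e0 (k + 1)) := (JJ_val k).symm
      rw [integral_eq_lintegral_of_nonneg_ae (Eventually.of_forall fun x => by simp only [hh, Pi.zero_apply]; positivity)
        hhm.aestronglyMeasurable]
      refine ENNReal.toReal_le_of_le_ofReal ?_ ?_
      · have h1 := sphereArea_pos (k + 1)
        have h2 := sphereArea_pos k
        have h3 : (0:ℝ) ≤ ((k + 2 : ℕ) : ℝ) - 1 := by push_cast; linarith [(Nat.cast_nonneg k : (0:ℝ) ≤ k)]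
        unfold Cconst
        rw [show k + 2 - 1 = k + 1 by rfl]
        positivity
      · rw [hJ]
        refine le_trans ?_ (mixed_le l hl)
        refine (setLIntegral_le_lintegral _ _).trans (lintegral_mono fun x => ?_)
        dsimp only
        rw [← ENNReal.ofReal_mul (abs_nonneg _)]
    linarith
  · refine tendsto_integral_filter_of_dominated_convergence (fun _ => 2 * (1 + n)) ?_ ?_ ?_ ?_
    · filter_upwards [self_mem_nhdsWithin] with r hr
      simp only [face r hr]
      have c1 : ∀ a, Continuous fun x : Fin (k + 1) → ℝ => kk r a (ZZ x) := fun a => (kk_cont hr a).comp ZZ_cont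
      have c2 : Continuous fun x : Fin (k + 1) → ℝ => ⟪l, ZZ x⟫ := continuous_const.inner ZZ_cont
      exact (continuous_const.mul ((continuous_const.mul (c1 _)).add
        (continuous_const.mul (c2.mul (c1 _))))).abs.aestronglyMeasurable
    · filter_upwards [self_mem_nhdsWithin] with r hr
      refine Eventually.of_forall fun x => ?_
      rw [face r hr, Real.norm_eq_abs, abs_abs, abs_mul, abs_two]
      refine mul_le_mul_of_nonneg_left ?_ zero_le_two
      refine (abs_add_le _ _).trans ?_
      have hN := hN1 x
      have b1 : |l 0 * kk r (n / 2) (ZZ x)| ≤ 1 := by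
        rw [abs_mul, abs_of_nonneg (kk_nonneg _ _ _)]
        have l0 : |l 0| ≤ 1 := by rw [← hl]; exact PiLp.norm_apply_le l 0
        have := (kk_le r (k + 1 + 1) (ZZ x) (ZZ_norm_pos x)).trans (inv_le_one_of_one_le₀ (one_le_pow₀ hN))
        exact mul_le_one₀ l0 (kk_nonneg _ _ _) this
      have b2 : |⟪l, ZZ x⟫ * kk r (n / 2 + 1) (ZZ x)| ≤ 1 := by
        rw [abs_mul, abs_of_nonneg (kk_nonneg _ _ _)]
        have h1 := inner_abs_le l (ZZ x) hl
        have h2 := kk_le r (k + 1 + 1 + 2) (ZZ x) (ZZ_norm_pos x)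
        rw [show ((k + 1 + 1 + 2 : ℕ) : ℝ) / 2 = n / 2 + 1 by rw [hn]; push_cast; ring] at h2
        calc _ ≤ ‖ZZ x‖ * (‖ZZ x‖ ^ (k + 1 + 1 + 2))⁻¹ := mul_le_mul h1 h2 (kk_nonneg _ _ _) (norm_nonneg _)
          _ = (‖ZZ x‖ ^ (k + 1 + 1 + 1))⁻¹ := by
            rw [pow_succ' _ (k + 1 + 1 + 1)]; have := ZZ_norm_pos x; field_simp
          _ ≤ 1 := inv_le_one_of_one_le₀ (one_le_pow₀ hN)
      rw [abs_mul n, abs_of_pos hn0]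
      nlinarith
    · exact continuous_const.integrableOn_Icc
    · refine Eventually.of_forall fun x => ?_
      have hz := ZZ_norm_pos x
      have t1 := kk_tendsto (n / 2) (ZZ x) hz
      have t2 := kk_tendsto (n / 2 + 1) (ZZ x) hz
      have t3 := (((t1.const_mul (l 0)).add ((t2.const_mul ⟪l, ZZ x⟫).const_mul n)).const_mul 2).abs
      have e : |2 * (l 0 * (‖ZZ x‖ ^ 2) ^ (-(n / 2)) + n * (⟪l, ZZ x⟫ * (‖ZZ x‖ ^ 2) ^ (-(n / 2 + 1))))| = 2 * h x := by
        have e1 : (‖ZZ x‖ ^ 2) ^ (-(n / 2)) = (‖ZZ x‖ ^ (k + 1 + 1))⁻¹ := by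
          rw [Real.rpow_neg (by positivity), ← Real.rpow_natCast ‖ZZ x‖ 2, ← Real.rpow_mul hz.le, ← Real.rpow_natCast ‖ZZ x‖ (k + 1 + 1)]
          congr 2
          rw [hn]; push_cast; ring
        have e2 : (‖ZZ x‖ ^ 2) ^ (-(n / 2 + 1)) = (‖ZZ x‖ ^ (k + 1 + 1))⁻¹ / ‖ZZ x‖ ^ 2 := by
          rw [show -(n / 2 + 1) = -(n / 2) - 1 by ring, Real.rpow_sub (by positivity), Real.rpow_one, e1]
        have e3 : ⟪e0 (k + 1), ZZ x⟫ = -1 := by rw [inner_e0', ZZ_zero]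
        simp only [hh]
        rw [e1, e2, e3, abs_mul, abs_two]
        congr 1
        rw [← abs_of_pos (by positivity : 0 < (‖ZZ x‖ ^ (k + 1 + 1))⁻¹), ← abs_mul, abs_of_pos (by positivity : 0 < (‖ZZ x‖ ^ (k + 1 + 1))⁻¹)]
        congr 1
        ring
      rw [e] at t3
      refine t3.congr' ?_
      filter_upwards [self_mem_nhdsWithin] with r hr
      rw [face r hr]

lemma core (k : ℕ) (M B : ℝ) (hM : 2 ≤ M) (hB : 0 ≤ B) (χ : Eu (k + 2) → ℝ) (hχ : CutOff χ M B)
    (v : Eu (k + 2) → ℝ) (U : Set (Eu (k + 2)))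
    (hU : IsOpen U) (hQ : ∀ x ∈ Set.Icc (boxA (k + 1) (2 * M)) (boxB (k + 1) (2 * M)), WithLp.toLp 2 x ∈ U)
    (hv : ContDiffOn ℝ 2 v U) (harm : ∀ y ∈ U, lap v y = 0) (hv1 : ∀ y ∈ U, |v y| ≤ 1)
    (G : Eu (k + 2)) (hG : HasGradientAt v G (e0 (k + 1))) :
    ‖G‖ * sphereArea (k + 2) ≤ errE (k + 1) M B * (2 * (2 * M)) ^ (k + 2) + Cconst (k + 2) * sphereArea (k + 2) := by
  obtain ⟨l, hl, hGl⟩ := unit_ex G (e0 (k + 1)) (norm_e0 _)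
  obtain ⟨J, hJ, hJt⟩ := face_lim k (2 * M) l hl
  set Q := Set.Icc (boxA (k + 1) (2 * M)) (boxB (k + 1) (2 * M)) with hQd
  set S : Set (Eu (k + 2)) := {y | WithLp.ofLp y ∈ Q} with hS
  have hSm : MeasurableSet S := (PiLp.continuous_ofLp 2 _).measurable measurableSet_Icc
  have hSU : S ⊆ U := fun y hy => by simpa using hQ _ hy
  set w : Eu (k + 2) → ℝ := S.indicator (fun y => v y * χ y) with hw
  have hwm : AEStronglyMeasurable w volume := by
    rw [hw, aestronglyMeasurable_indicator_iff hSm]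
    exact ((hv.continuousOn.mono hSU).mul hχ.smooth.continuous.continuousOn).aestronglyMeasurable hSm
  have hw1 : ∀ y, |w y| ≤ 1 := by
    intro y
    by_cases hy : y ∈ S
    · rw [hw, Set.indicator_of_mem hy, abs_mul, abs_of_nonneg (hχ.nonneg y)]
      exact mul_le_one₀ (hv1 y (hSU hy)) (hχ.nonneg y) (hχ.le_one y)
    · rw [hw, Set.indicator_of_notMem hy]; simp
  have hev : w =ᶠ[𝓝 (e0 (k + 1))] v := by
    have o1 : ∀ᶠ y : Eu (k + 2) in 𝓝 (e0 (k + 1)), ‖y‖ < M :=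
      (continuous_norm.tendsto (e0 (k + 1))).eventually_lt_const (by rw [norm_e0]; linarith)
    have o2 : ∀ᶠ y : Eu (k + 2) in 𝓝 (e0 (k + 1)), 0 < y 0 := by
      have hc : Continuous (fun y : Eu (k + 2) => y 0) := PiLp.continuous_apply 2 _ 0
      exact (hc.tendsto (e0 (k + 1))).eventually_const_lt (by rw [e0_zero]; norm_num)
    filter_upwards [o1, o2] with y h1 h2
    have hc : ∀ i, |y i| ≤ M := fun i => (PiLp.norm_apply_le y i).trans h1.le
    have hy : y ∈ S := by
      refine ⟨fun i => ?_, fun i => ?_⟩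
      · refine Fin.cases ?_ (fun j => ?_) i
        · simpa [boxA] using h2.le
        · have := (abs_le.1 (hc j.succ)).1
          simp only [boxA, Fin.cons_succ]
          linarith
      · have := (abs_le.1 (hc i)).2
        simp only [boxB]
        linarith
    rw [hw, Set.indicator_of_mem hy, (hχ.inner y h1).1, mul_one]
  have hGw : HasGradientAt w G (e0 (k + 1)) := hG.congr_of_eventuallyEq hev
  have t1 := approx w hwm hw1 (e0 (k + 1)) G hGw l hl
  have hlim : ((k + 1 + 1 : ℕ) : ℝ) * ((k + 1 + 1 : ℕ) + 2) * ∫ z, ⟪G, z⟫ * AA l 1 z = ‖G‖ * sphereArea (k + 2) := by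
    rw [← dir_moment (k + 1) l hl]
    have : ∀ z : Eu (k + 2), ⟪G, z⟫ * AA l 1 z = ‖G‖ * (⟪l, z⟫ ^ 2 * kk 1 (((k + 1 + 1 : ℕ) : ℝ) / 2 + 2) z) := by
      intro z
      rw [hGl, real_inner_smul_left, ← hGl]
      unfold AA; ring
    simp only [this]
    rw [integral_const_mul]; ring
  have t2 := (t1.const_mul (((k + 1 + 1 : ℕ) : ℝ) * ((k + 1 + 1 : ℕ) + 2))).abs
  rw [hlim, abs_of_nonneg (mul_nonneg (norm_nonneg _) (sphereArea_pos (k + 1)).le)] at t2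
  have t3 : Tendsto (fun r : ℝ => (((k + 1 + 1 : ℕ) : ℝ) * ((k + 1 + 1 : ℕ) + 2) * r ^ 2 + errE (k + 1) M B) * (2 * (2 * M)) ^ (k + 2) +
      ∫ x in Set.Icc (fun _ : Fin (k + 1) => -(2 * M)) (fun _ => 2 * M),
        |pd 0 (gg l r) (WithLp.toLp 2 (Fin.insertNth (0 : Fin (k + 2)) (0 : ℝ) x))|) (𝓝[>] 0)
      (𝓝 (errE (k + 1) M B * (2 * (2 * M)) ^ (k + 2) + J)) := by
    refine Tendsto.add ?_ hJt
    have hc : Continuous (fun r : ℝ => (((k + 1 + 1 : ℕ) : ℝ) * ((k + 1 + 1 : ℕ) + 2) * r ^ 2 + errE (k + 1) M B) * (2 * (2 * M)) ^ (k + 2)) := by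
      fun_prop
    have h := (hc.tendsto 0).mono_left (nhdsWithin_le_nhds (s := Set.Ioi (0:ℝ)))
    simpa using h
  have hle := le_of_tendsto_of_tendsto t2 t3 (by
    filter_upwards [self_mem_nhdsWithin] with r hr
    have c := core_r (k + 1) M B hM hB χ hχ v U hU hQ hv harm hv1 l hl r hr
    have hI : ∫ y, w y * AA l r (y - e0 (k + 1)) = ∫ x in Q,
      (v (WithLp.toLp 2 x) * (χ (WithLp.toLp 2 x) * AA l r (WithLp.toLp 2 x - e0 (k + 1)))) := by
      rw [← (PiLp.volume_preserving_toLp (Fin (k + 2))).integral_comp (MeasurableEquiv.toLp 2 _).measurableEmbedding,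
        ← integral_indicator measurableSet_Icc]
      congr 1; ext x
      by_cases hx : x ∈ Q
      · have hx' : WithLp.toLp 2 x ∈ S := hx
        rw [Set.indicator_of_mem hx, hw, Set.indicator_of_mem hx']; ring
      · have hx' : WithLp.toLp 2 x ∉ S := hx
        rw [Set.indicator_of_notMem hx, hw, Set.indicator_of_notMem hx']; ring
    rw [← hI] at c
    rw [← mul_assoc]
    exact c)
  linarith

lemma core_eps (k : ℕ) (ε : ℝ) (hε : 0 < ε) : ∃ K : ℝ, 0 < K ∧ 
    ∀ (v : Eu (k + 2) → ℝ) (U : Set (Eu (k + 2))), IsOpen U → 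
    (∀ y : Eu (k + 2), 0 ≤ y 0 → ‖y‖ ≤ K → y ∈ U) →
    ContDiffOn ℝ 2 v U → (∀ y ∈ U, lap v y = 0) → (∀ y ∈ U, |v y| ≤ 1) →
    ∀ G : Eu (k + 2), HasGradientAt v G (e0 (k + 1)) → ‖G‖ ≤ Cconst (k + 2) + ε := by
  obtain ⟨B, hB, hBc⟩ := exists_cutoff (k + 2)
  have hω := sphereArea_pos (k + 1)
  set E : ℝ := (B * (4 * ((k + 1 : ℕ) + 1) * ((k + 1 : ℕ) + 2) * 8 ^ (k + 1 + 1) + 8 * 8 ^ (k + 1))) with hE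
  have hE0 : 0 ≤ E := by positivity
  set M : ℝ := max 2 (E / (ε * sphereArea (k + 2))) with hM
  have hM2 : 2 ≤ M := le_max_left _ _
  have hM0 : 0 < M := by linarith
  obtain ⟨χ, hχ⟩ := hBc M hM0
  refine ⟨2 * M * (k + 2), by positivity, fun v U hU hUK hv harm hv1 G hG => ?_⟩
  have hQ : ∀ x ∈ Set.Icc (boxA (k + 1) (2 * M)) (boxB (k + 1) (2 * M)), WithLp.toLp 2 x ∈ U := by
    intro x hx
    refine hUK _ (box_nonneg hx) ?_
    have hxi : ∀ i, |x i| ≤ 2 * M := by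
      intro i
      rw [abs_le]
      refine ⟨?_, hx.2 i⟩
      have := hx.1 i
      refine le_trans ?_ this
      refine Fin.cases ?_ (fun j => ?_) i
      · simp [boxA]; linarith
      · simp [boxA]
    have hsq : ‖(WithLp.toLp 2 x : Eu (k + 2))‖ ^ 2 ≤ (2 * M * (k + 2)) ^ 2 := by
      rw [EuclideanSpace.real_norm_sq_eq]
      calc ∑ i, x i ^ 2 ≤ ∑ i : Fin (k + 2), (2 * M) ^ 2 := Finset.sum_le_sum fun i _ => by
            rw [← sq_abs]; exact pow_le_pow_left₀ (abs_nonneg _) (hxi i) 2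
        _ = (k + 2) * (2 * M) ^ 2 := by simp
        _ ≤ _ := by
          have : (0:ℝ) ≤ k := Nat.cast_nonneg k
          have h2 : (k + 2 : ℝ) ≤ (k + 2) ^ 2 := by nlinarith
          have h3 := mul_le_mul_of_nonneg_right h2 (sq_nonneg (2 * M))
          linarith [mul_pow (2 * M) (k + 2 : ℝ) 2]
    exact abs_le_of_sq_le_sq' hsq (by positivity) |>.2
  have c := core k M B hM2 hB χ hχ v U hU hQ hv harm hv1 G hG
  have e := errE_eq (k + 1) M B hM0
  rw [e] at c
  have h1 : E / M ≤ ε * sphereArea (k + 2) := by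
    rw [div_le_iff₀ hM0, ← div_le_iff₀' (by positivity : 0 < ε * sphereArea (k + 2))]
    exact le_max_right _ _
  have h2 : ‖G‖ * sphereArea (k + 2) ≤ (Cconst (k + 2) + ε) * sphereArea (k + 2) := by
    rw [add_mul]
    linarith
  exact le_of_mul_le_mul_right h2 hω


open scoped Topology ENNReal Laplacian

lemma pd2_eq {n : ℕ} (u : Eu n → ℝ) (x : Eu n) (hu : ContDiffAt ℝ 2 u x) (e e' : Eu n) :
    fderiv ℝ (fun y => fderiv ℝ u y e) x e' = iteratedFDeriv ℝ 2 u x ![e', e] := by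
  rw [iteratedFDeriv_two_apply]
  have h : DifferentiableAt ℝ (fderiv ℝ u) x :=
    (hu.fderiv_right (m := 1) (by norm_num)).differentiableAt (by norm_num)
  have := h.hasFDerivAt.clm_apply (hasFDerivAt_const e x)
  rw [this.fderiv]
  simp

lemma lap_iso {n : ℕ} (u : Eu n → ℝ) (L : Eu n ≃ₗᵢ[ℝ] Eu n) (a : Eu n) (b : ℝ) (y : Eu n)
    (hu : ContDiffAt ℝ 2 u (a + b • L y)) :
    lap (fun y => u (a + b • L y)) y =
      b ^ 2 * ∑ i, fderiv ℝ (fun y => fderiv ℝ u y (EuclideanSpace.single i 1)) (a + b • L y)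
      (EuclideanSpace.single i 1) := by
  have hT : ∀ y, HasFDerivAt (fun y : Eu n => a + b • L y) (b • (L : Eu n →L[ℝ] Eu n)) y := by
    intro y
    exact ((L : Eu n →L[ℝ] Eu n).hasFDerivAt.const_smul b).const_add a
  have hTc : Continuous (fun y : Eu n => a + b • L y) := by
    have := L.continuous
    fun_prop
  have hev : ∀ᶠ z in 𝓝 y, ContDiffAt ℝ 2 u (a + b • L z) :=
    hTc.tendsto y (hu.eventually (by simp))
  have step : ∀ i, pd i (pd i (fun y => u (a + b • L y))) y =
      b ^ 2 * iteratedFDeriv ℝ 2 u (a + b • L y) ![L (EuclideanSpace.single i 1), L (EuclideanSpace.single i 1)] := by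
    intro i
    set e : Eu n := EuclideanSpace.single i 1
    have h1 : pd i (fun y => u (a + b • L y)) =ᶠ[𝓝 y] fun z => b * fderiv ℝ u (a + b • L z) (L e) := by
      filter_upwards [hev] with z hz
      unfold pd
      have := ((hz.differentiableAt (by norm_num)).hasFDerivAt.comp z (hT z))
      have h2 : fderiv ℝ (fun y => u (a + b • L y)) z = _ := this.fderiv
      rw [h2]
      simp [e]
    have h3 : DifferentiableAt ℝ (fun x => fderiv ℝ u x (L e)) (a + b • L y) := by
      have h : DifferentiableAt ℝ (fderiv ℝ u) (a + b • L y) :=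
        (hu.fderiv_right (m := 1) (by norm_num)).differentiableAt (by norm_num)
      exact h.clm_apply (differentiableAt_const _)
    rw [← pd2_eq u _ hu]
    have h4 := (h3.hasFDerivAt.comp y (hT y)).const_mul b
    have h5 : fderiv ℝ (fun z => b * fderiv ℝ u (a + b • L z) (L e)) y = _ := h4.fderiv
    unfold pd at h1 ⊢
    rw [h1.fderiv_eq, h5]
    simp [e]
    ring
  unfold lap
  rw [Finset.sum_congr rfl fun i _ => step i, ← Finset.mul_sum]
  congr 1
  have k1 := congrFun (InnerProductSpace.laplacian_eq_iteratedFDeriv_orthonormalBasis u ((EuclideanSpace.basisFun (Fin n) ℝ).map L)) (a + b • L y)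
  have k2 := congrFun (InnerProductSpace.laplacian_eq_iteratedFDeriv_orthonormalBasis u (EuclideanSpace.basisFun (Fin n) ℝ)) (a + b • L y)
  rw [k1] at k2
  simp only [OrthonormalBasis.map_apply, EuclideanSpace.basisFun_apply] at k2
  rw [k2]
  exact Finset.sum_congr rfl fun i _ => (pd2_eq u _ hu _ _).symm

lemma Cconst_nonneg (k : ℕ) : 0 ≤ Cconst (k + 2) := by
  have h1 := sphereArea_pos (k + 1)
  have h2 := sphereArea_pos k
  have h3 : (0:ℝ) ≤ ((k + 2 : ℕ) : ℝ) - 1 := by push_cast; linarith [(Nat.cast_nonneg k : (0:ℝ) ≤ k)]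
  unfold Cconst
  rw [show k + 2 - 1 = k + 1 by rfl]
  positivity

lemma main_aux (k : ℕ) (Ω : Set (Eu (k + 2))) (hΩo : IsOpen Ω)
    (c ξ : Eu (k + 2)) (R : ℝ) (hR : 0 < R)
    (hball : Metric.ball c R ⊆ Ω) (hξs : ξ ∈ Metric.sphere c R)
    (ε : ℝ) (hε : 0 < ε) :
    ∃ δ > 0, ∀ t : ℝ, 1 - δ < t → t < 1 →
      ∀ u : Eu (k + 2) → ℝ, IsHarmonicOn u Ω → (∀ y ∈ Ω, |u y| ≤ 1) →
        dist (c + t • (ξ - c)) ξ * ‖gradient u (c + t • (ξ - c))‖ ≤ Cconst (k + 2) + ε := by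
  have hC := Cconst_nonneg k
  obtain ⟨K, hK, hcore⟩ := core_eps k (ε / 2) (by positivity)
  set s : ℝ := ε / 2 / (Cconst (k + 2) + ε) with hs
  have hs0 : 0 < s := by positivity
  have hsm : s * (Cconst (k + 2) + ε) = ε / 2 := by rw [hs]; field_simp
  have hs1 : s < 1 := by rw [hs, div_lt_one (by positivity)]; linarith
  refine ⟨min 1 (s / (1 + K ^ 2)), by positivity, fun t ht1 ht2 u hu hu1 => ?_⟩
  set d : ℝ := (1 - t) * R with hd
  have hd0 : 0 < d := mul_pos (by linarith) hR
  have hdR : d < R := by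
    have : 1 - t < 1 := by linarith [min_le_left 1 (s / (1 + K ^ 2))]
    nlinarith
  have hdK : d * (1 + K ^ 2) < R * s := by
    have : 1 - t < s / (1 + K ^ 2) := by linarith [min_le_right 1 (s / (1 + K ^ 2))]
    rw [lt_div_iff₀ (by positivity)] at this
    rw [hd]; nlinarith
  set ν : Eu (k + 2) := R⁻¹ • (c - ξ) with hν
  have hcξ : ‖c - ξ‖ = R := by rw [← dist_eq_norm, dist_comm]; exact hξs
  have hν1 : ‖ν‖ = 1 := by rw [hν, norm_smul, hcξ, norm_inv, Real.norm_eq_abs, abs_of_pos hR]; field_simp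
  have hRν : R • ν = c - ξ := by rw [hν, smul_smul, mul_inv_cancel₀ hR.ne', one_smul]
  obtain ⟨L, hL⟩ := exists_iso (e0 (k + 1)) ν (by rw [norm_e0, hν1])
  set b : ℝ := d * (1 - s) with hb
  have hb0 : 0 < b := mul_pos hd0 (by linarith)
  set a : Eu (k + 2) := ξ + (d * s) • ν with ha
  have hξc : ξ = c - R • ν := by rw [hRν]; abel
  have hTe : a + b • L (e0 (k + 1)) = c + t • (ξ - c) := by
    rw [hL, ha, hξc, hb, hd]; module
  have hdist : dist (c + t • (ξ - c)) ξ = d := by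
    rw [dist_eq_norm, show c + t • (ξ - c) - ξ = (1 - t) • (c - ξ) by module, norm_smul, hcξ, Real.norm_eq_abs,
      abs_of_pos (by linarith)]
  have hTc : Continuous (fun y : Eu (k + 2) => a + b • L y) := by
    have := L.continuous
    fun_prop
  set U : Set (Eu (k + 2)) := (fun y : Eu (k + 2) => a + b • L y) ⁻¹' Ω with hU
  have hbox : ∀ y : Eu (k + 2), 0 ≤ y 0 → ‖y‖ ≤ K → y ∈ U := by
    intro y hy0 hyK
    refine hball ?_
    rw [mem_ball, dist_eq_norm, show a + b • L y - c = b • L y - (R - d * s) • ν by rw [ha, hξc]; module]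
    have i1 : ⟪L y, ν⟫ = y 0 := by rw [← hL, LinearIsometryEquiv.inner_map_map, inner_e0]
    have hsq : ‖b • L y - (R - d * s) • ν‖ ^ 2 < R ^ 2 := by
      rw [norm_sub_sq_real, real_inner_smul_left, real_inner_smul_right, i1, norm_smul, norm_smul, hν1, L.norm_map, Real.norm_eq_abs,
        Real.norm_eq_abs, mul_pow, mul_one, sq_abs, sq_abs]
      have hds : d * s < d := by nlinarith
      have p1 : 0 ≤ b * ((R - d * s) * y 0) := mul_nonneg hb0.le (mul_nonneg (by linarith) hy0)
      have p2 : b ^ 2 * ‖y‖ ^ 2 ≤ d ^ 2 * K ^ 2 := by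
        have hbd : b ≤ d := by rw [hb]; nlinarith
        exact mul_le_mul (pow_le_pow_left₀ hb0.le hbd 2) (pow_le_pow_left₀ (norm_nonneg _) hyK 2) (by positivity) (by positivity)
      have p3 : (d * s) ^ 2 ≤ d ^ 2 := by
        exact pow_le_pow_left₀ (by positivity) hds.le 2
      have p4 : d * (d * (1 + K ^ 2)) < d * (R * s) := mul_lt_mul_of_pos_left hdK hd0
      have p5 : 0 < d * (R * s) := by positivity
      nlinarith
    exact lt_of_pow_lt_pow_left₀ 2 hR.le hsq
  have hcd : ∀ y ∈ U, ContDiffAt ℝ 2 u (a + b • L y) := fun y hy => hu.1.contDiffAt (hΩo.mem_nhds hy)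
  have hTcd : ContDiff ℝ 2 (fun y : Eu (k + 2) => a + b • L y) :=
    contDiff_const.add (L.contDiff.const_smul b)
  have hv : ContDiffOn ℝ 2 (fun y => u (a + b • L y)) U := hu.1.comp hTcd.contDiffOn (fun y hy => hy)
  have he0U : e0 (k + 1) ∈ U := by
    refine hball ?_
    show a + b • L (e0 (k + 1)) ∈ _
    have ht0 : 0 < t := by linarith [min_le_left 1 (s / (1 + K ^ 2))]
    rw [hTe, mem_ball, dist_eq_norm, add_sub_cancel_left, norm_smul, norm_sub_rev, hcξ, Real.norm_eq_abs, abs_of_pos ht0]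
    nlinarith
  set g := gradient u (c + t • (ξ - c)) with hg
  have hgr : HasGradientAt u g (a + b • L (e0 (k + 1))) := by
    rw [hg, ← hTe]
    exact ((hcd _ he0U).differentiableAt (by norm_num)).hasGradientAt
  have hG : HasGradientAt (fun y => u (a + b • L y)) (b • L.symm g) (e0 (k + 1)) := by
    rw [hasGradientAt_iff_hasFDerivAt]
    have hT : HasFDerivAt (fun y : Eu (k + 2) => a + b • L y) (b • (L : Eu (k + 2) →L[ℝ] Eu (k + 2))) (e0 (k + 1)) :=
      ((L : Eu (k + 2) →L[ℝ] Eu (k + 2)).hasFDerivAt.const_smul b).const_add a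
    have := hgr.hasFDerivAt.comp (e0 (k + 1)) hT
    convert! this using 1
    ext z
    simp only [InnerProductSpace.toDual_apply_apply, ContinuousLinearMap.comp_apply, ContinuousLinearMap.smul_apply]
    rw [real_inner_smul_left, real_inner_smul_right]
    congr 1
    have := L.inner_map_map (L.symm g) z
    rw [L.apply_symm_apply] at this
    exact this.symm
  have fin := hcore (fun y => u (a + b • L y)) U (hΩo.preimage hTc) hbox hv
    (fun y hy => by rw [lap_iso u L a b y (hcd y hy), hu.2 _ hy, mul_zero]) (fun y hy => hu1 _ hy) _ hG
  rw [norm_smul, L.symm.norm_map, Real.norm_eq_abs, abs_of_pos hb0, hb] at fin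
  rw [hdist]
  have h1s : 0 < 1 - s := by linarith
  refine le_of_mul_le_mul_left ?_ h1s
  calc (1 - s) * (d * ‖g‖) = d * (1 - s) * ‖g‖ := by ring
    _ ≤ Cconst (k + 2) + ε / 2 := fin
    _ = (1 - s) * (Cconst (k + 2) + ε) := by linear_combination hsm


end Aux

/-- Let `Ω ⊂ ℝⁿ` (`n ≥ 2`) be a domain and suppose `ξ ∈ ∂Ω` is touched
by an interior ball `B = ball c R ⊆ Ω`. Then, along the radius `x_t = c + t(ξ - c)`,
`limsup_{x→ξ} sup_{u ∈ 𝔘(Ω)} |x-ξ| |∇u(x)| ≤ C_n`, where `𝔘(Ω)` is the set of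
harmonic functions on `Ω` with `sup_Ω |u| ≤ 1`; i.e. for every `ε > 0` there is
`δ > 0` such that for all `t ∈ (1-δ, 1)` and all `u ∈ 𝔘(Ω)`,
`|x_t - ξ| |∇u(x_t)| ≤ C_n + ε`. -/
theorem limsup_gradient_interior_ball
    (n : ℕ) (hn : 2 ≤ n) (Ω : Set (Eu n)) (hΩo : IsOpen Ω) (hΩc : IsConnected Ω)
    (c ξ : Eu n) (R : ℝ) (hR : 0 < R)
    (hball : Metric.ball c R ⊆ Ω) (hξs : ξ ∈ Metric.sphere c R) (hξ : ξ ∈ frontier Ω)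
    (ε : ℝ) (hε : 0 < ε) :
    ∃ δ > 0, ∀ t : ℝ, 1 - δ < t → t < 1 →
      ∀ u : Eu n → ℝ, IsHarmonicOn u Ω → (∀ y ∈ Ω, |u y| ≤ 1) →
        dist (c + t • (ξ - c)) ξ * ‖gradient u (c + t • (ξ - c))‖ ≤ Cconst n + ε := by
  obtain ⟨k, rfl⟩ : ∃ k, n = k + 2 := ⟨n - 2, by omega⟩
  exact main_aux k Ω hΩo c ξ R hR hball hξs ε hε
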